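/- Suppose S ⊆ ℝ is discrete, Y ⊆ ℝ^k is a closed perfect set, and Z ⊆ ℝ∖{0} is σ-compact. If λY = {λy : y ∈ Y} is gap-rich with exceptional set S for every λ ∈ Z, then for generic y ∈ LP(ℤ,Y) the spectrum of H_{λy} (the discrete Schrödinger operator with potential λ·y^♮) is a Cantor set of zero Hausdorff dimension for all λ ∈ Z. -/

import Mathlib

/-!
The spectra are nonempty, compact and without isolated points for every limit-periodic `y`, and have
Hausdorff dimension zero for generic `y`; a subset of `ℝ` of dimension zero has empty interior.
Throughout, `E ∉ σ(H_W)` is used in the form that `H_W - E` is bounded below by some `γ > 0`, which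
is stable under perturbations of `W` and `E`.

*No isolated points.* If `E` is isolated in the spectrum of a self-adjoint operator, then `H_W - E`
is bounded below on the orthogonal complement of its kernel. Far translates of an eigenfunction by
almost periods are almost eigenfunctions, hence close to the eigenspace, although they are small at
`0` and `1`, where the elements of the eigenspace are determined by their values. So the kernel is
trivial, and `E` is not in the spectrum.

*Thin spectra are dense.* Fix a compact set `K` of couplings and a periodic `X`. Away from small
intervals around the finitely many relevant points of `S`, gap-richness and compactness give
finitely many periodic sequences `P₁, …, Pₘ` near `X` such that for each coupling in `K` and each
energy, one of them has a gap of size `γ` there. Let `y` be the periodic concatenation of stretches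
of `P₁, …, Pₘ` of length proportional to `N`. If `E` is in a gap of `Pⱼ`, the stretches of `Pⱼ` are
barriers: the mass in their middle is exponentially small in `N`. Cutting `ℤ` in these middles turns
`H_y` into copies of one finite matrix, so `E` can be in the spectrum only if it is exponentially
close to one of the `O(N)` eigenvalues of this matrix. So the spectrum is covered by `O(N)`
intervals of length exponentially small in `N`, besides the small intervals around `S`, and this
cover works for all sequences close to `y`.

*Genericity.* For all `m` and `n`, the sequences whose spectra have finite covers by sets `Uᵢ` with
`∑ diam(Uᵢ) ^ (1 / (m + 1)) < 1 / n` for all couplings in `K` thus contain a dense open set, and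
Baire's theorem applies to countably many `m`, `n` and `K`.
-/

open Set MeasureTheory BoundedContinuousFunction

noncomputable section

/-- ℓ²(ℤ; ℝ). -/
abbrev Ell2 : Type := lp (fun _ : ℤ => ℝ) 2

/-- Spectrum of the discrete Schrödinger operator `H_W = Δ + W` on `ℓ²(ℤ)`:
`E` lies in the spectrum iff `H_W - E` is not a linear bijection of `ℓ²(ℤ)`
(for bounded `W`, by the open mapping theorem this is equivalent to `H_W - E`
not being boundedly invertible). -/
def SchrodingerSpectrum (W : ℤ → ℝ) : Set ℝ :=
  {E : ℝ | ¬ ∃ T : Ell2 ≃ₗ[ℝ] Ell2,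
      ∀ f : Ell2, ∀ n : ℤ,
        (T f) n = f (n - 1) + f (n + 1) + (W n - E) * f n}

/-- A Cantor set of zero Hausdorff dimension: nonempty, compact, without isolated
points, with empty interior, and of Hausdorff dimension zero. -/
def IsZeroDimCantor (s : Set ℝ) : Prop :=
  s.Nonempty ∧ IsCompact s ∧ Preperfect s ∧ interior s = ∅ ∧ dimH s = 0

/-- Periodic bounded sequences. -/
def IsPeriodicSeq {α : Type*} [PseudoMetricSpace α] (W : ℤ →ᵇ α) : Prop :=
  ∃ q : ℕ, 0 < q ∧ ∀ n : ℤ, W (n + q) = W n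

/-- The limit-periodic functions `ℤ → ℝ`: uniform limits of periodic functions. -/
def LPZ : Set (ℤ →ᵇ ℝ) := closure {W : ℤ →ᵇ ℝ | IsPeriodicSeq W}

/-- A subset of ℝ is discrete if it has no accumulation points. -/
def IsDiscreteSet (S : Set ℝ) : Prop := ∀ x : ℝ, ¬ AccPt x (Filter.principal S)

/-- Periodic extension `w^{♯ℤ}` of a finite word `w`. -/
def perExt {α : Type*} [Zero α] {m : ℕ} (w : Fin m → α) : ℤ → α :=
  fun n =>
    if h : 0 < m then
      w ⟨(n % (m : ℤ)).toNat, by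
        have h1 : 0 ≤ n % (m : ℤ) := Int.emod_nonneg n (by exact_mod_cast h.ne')
        have h2 : n % (m : ℤ) < (m : ℤ) := Int.emod_lt_of_pos n (by exact_mod_cast h)
        omega⟩
    else 0

/-- Aggregation `y^♮` of a sequence of blocks in `ℝ^k` into a potential `ℤ → ℝ`. -/
def agg (k : ℕ) (x : ℤ → (Fin k → ℝ)) : ℤ → ℝ :=
  fun n =>
    if h : 0 < k then
      x (Int.fdiv n k) ⟨(n % (k : ℤ)).toNat, by
        have h1 : 0 ≤ n % (k : ℤ) := Int.emod_nonneg n (by exact_mod_cast h.ne')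
        have h2 : n % (k : ℤ) < (k : ℤ) := Int.emod_lt_of_pos n (by exact_mod_cast h)
        omega⟩
    else 0

/-- `Y ⊆ ℝ^k` is gap-rich with exceptional set `S`: `S` is discrete and near any
word over `Y` there is a word over `Y` whose periodic Schrödinger operator has a
gap at any prescribed energy `E ∉ S`. -/
def GapRich (k : ℕ) (Y : Set (Fin k → ℝ)) (S : Set ℝ) : Prop :=
  IsDiscreteSet S ∧
  ∀ E : ℝ, E ∉ S → ∀ m : ℕ, 0 < m → ∀ x : Fin m → (Fin k → ℝ), (∀ i, x i ∈ Y) →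
    ∀ ε : ℝ, 0 < ε →
      ∃ l : ℕ, 0 < l ∧ ∃ y : Fin l → (Fin k → ℝ),
        (∀ i, y i ∈ Y) ∧
        (∀ j : ℤ, dist (perExt x j) (perExt y j) < ε) ∧
        E ∉ SchrodingerSpectrum (agg k (perExt y))

/-- The periodic elements of `Y^ℤ`. -/
def PerY (k : ℕ) (Y : Set (Fin k → ℝ)) : Set (ℤ →ᵇ (Fin k → ℝ)) :=
  {x | IsPeriodicSeq x ∧ ∀ n : ℤ, x n ∈ Y}

/-- The limit-periodic elements of `Y^ℤ`: uniform limits of periodic elements. -/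
def LPY (k : ℕ) (Y : Set (Fin k → ℝ)) : Set (ℤ →ᵇ (Fin k → ℝ)) := closure (PerY k Y)

open Filter
open scoped Topology ENNReal NNReal

section SelfAdjoint

variable {F : Type*} [NormedAddCommGroup F] [InnerProductSpace ℝ F] {A B : F →L[ℝ] F}
  {E E' γ γ' δ : ℝ}

/-- The operator `A - E` is bounded below by `γ`. For self-adjoint `A` and `γ > 0`, this is
the form in which the spectral gap `(E - γ, E + γ)` of `A` is used. -/
def HasGap (A : F →L[ℝ] F) (E γ : ℝ) : Prop := ∀ u, γ * ‖u‖ ≤ ‖A u - E • u‖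

theorem HasGap.mono (h : HasGap A E γ) (hle : γ' ≤ γ) : HasGap A E γ' := fun u =>
  (mul_le_mul_of_nonneg_right hle (norm_nonneg u)).trans (h u)

theorem HasGap.perturb (h : HasGap A E γ) (B : F →L[ℝ] F) (E' : ℝ) :
    HasGap B E' (γ - ‖A - B‖ - |E - E'|) := fun u => by
  have hAB : ‖A u - B u‖ ≤ ‖A - B‖ * ‖u‖ := (A - B).le_opNorm u
  have hE : ‖E • u - E' • u‖ = |E - E'| * ‖u‖ := by rw [← sub_smul, norm_smul, Real.norm_eq_abs]
  have htri : ‖A u - E • u‖ ≤ ‖B u - E' • u‖ + ‖A u - B u‖ + ‖E • u - E' • u‖ := by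
    have := norm_sub_le (B u - E' • u + (A u - B u)) (E • u - E' • u)
    have := norm_add_le (B u - E' • u) (A u - B u)
    have : B u - E' • u + (A u - B u) - (E • u - E' • u) = A u - E • u := by abel
    grind
  linarith [h u]

theorem HasGap.of_semiconj (h : HasGap A E γ) (e : F ≃ₗᵢ[ℝ] F) (he : ∀ u, A (e u) = e (B u)) :
    HasGap B E γ := fun u => by
  have := h (e u)
  rwa [he, ← map_smul e, ← map_sub, e.norm_map, e.norm_map] at this

theorem HasGap.two_mul_inner_le {s : ℝ} (h : HasGap A s |s|) (u : F) :
    2 * s * inner ℝ (A u) u ≤ ‖A u‖ ^ 2 := by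
  have hsq : (|s| * ‖u‖) ^ 2 ≤ ‖A u - s • u‖ ^ 2 := by gcongr; exact h u
  rw [norm_sub_sq_real, norm_smul, inner_smul_right, mul_pow, mul_pow, Real.norm_eq_abs] at hsq
  linarith

variable [CompleteSpace F]

theorem HasGap.notMem_spectrum (h : HasGap A E γ) (hA : IsSelfAdjoint A) (hγ : 0 < γ) :
    E ∉ spectrum ℝ A := by
  set T : F →L[ℝ] F := A - algebraMap ℝ _ E
  have hT : IsSelfAdjoint T := hA.sub (.algebraMap _ (.all E))
  have hanti : AntilipschitzWith γ.toNNReal⁻¹ T := T.antilipschitz_of_bound fun u => by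
    rw [NNReal.coe_inv, Real.coe_toNNReal _ hγ.le, inv_mul_eq_div, le_div_iff₀ hγ, mul_comm]
    simpa [T, Algebra.algebraMap_eq_smul_one] using h u
  have hrange : T.rangeᗮ = ⊥ := by
    rw [T.orthogonal_range, hT.adjoint_eq, LinearMap.ker_eq_bot]
    exact hanti.injective
  rw [spectrum.notMem_iff, IsUnit.sub_iff, ContinuousLinearMap.isUnit_iff_bijective,
    ContinuousLinearMap.bijective_iff_dense_range_and_antilipschitz]
  exact ⟨Submodule.topologicalClosure_eq_top_iff.2 hrange, _, hanti⟩

theorem norm_le_of_forall_mem_spectrum (hA : IsSelfAdjoint A) {r : ℝ} (hr : 0 ≤ r)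
    (h : ∀ t ∈ spectrum ℝ A, |t| ≤ r) : ‖A‖ ≤ r := by
  lift r to NNReal using hr
  have hrad : spectralRadius ℝ A ≤ r :=
    iSup₂_le fun t ht => ENNReal.coe_le_coe.2 (NNReal.coe_le_coe.1 (h t ht))
  rw [A.spectralRadius_eq_nnnorm hA] at hrad
  exact NNReal.coe_le_coe.2 (ENNReal.coe_le_coe.1 hrad)

theorem norm_inv_le_of_forall_mem_spectrum {T : (F →L[ℝ] F)ˣ} (hT : IsSelfAdjoint T) (hγ : 0 < γ)
    (h : ∀ t ∈ spectrum ℝ (T : F →L[ℝ] F), γ ≤ |t|) : ‖(T⁻¹).val‖ ≤ γ⁻¹ := by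
  have hT' : IsSelfAdjoint (T⁻¹).val := congrArg Units.val hT.inv.star_eq
  refine norm_le_of_forall_mem_spectrum hT' (inv_nonneg.2 hγ.le) fun t ht => ?_
  rcases eq_or_ne t 0 with rfl | ht0
  · simpa using hγ.le
  have hinv : t⁻¹ ∈ spectrum ℝ (T : F →L[ℝ] F) := by
    simpa using (spectrum.inv_mem_iff (r := Units.mk0 t ht0) (a := T⁻¹)).1 ht
  have := h _ hinv
  rw [abs_inv] at this
  exact (le_inv_comm₀ hγ (abs_pos.2 ht0)).1 this

theorem hasGap_of_disjoint_ball (hA : IsSelfAdjoint A)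
    (h : Disjoint (Metric.ball E γ) (spectrum ℝ A)) : HasGap A E γ := fun u => by
  rcases le_or_gt γ 0 with hγ | hγ
  · exact (mul_nonpos_of_nonpos_of_nonneg hγ (norm_nonneg u)).trans (norm_nonneg _)
  obtain ⟨T, hT⟩ : IsUnit (A - algebraMap ℝ _ E) :=
    IsUnit.sub_iff.1 (spectrum.notMem_iff.1 (h.notMem_of_mem_left (Metric.mem_ball_self hγ)))
  have hsa : IsSelfAdjoint T := Units.ext (by
    rw [Units.coe_star, hT, (hA.sub (.algebraMap _ (.all E))).star_eq])
  have hnorm : ‖(T⁻¹).val‖ ≤ γ⁻¹ := by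
    refine norm_inv_le_of_forall_mem_spectrum hsa hγ fun t ht => ?_
    rw [hT, sub_eq_neg_add, ← spectrum.add_mem_iff] at ht
    have := h.notMem_of_mem_right ht
    rwa [Metric.mem_ball, not_lt, Real.dist_eq, add_sub_cancel_right] at this
  have hTu : A u - E • u = T.val u := by simp [hT, Algebra.algebraMap_eq_smul_one]
  have hinv : (T⁻¹).val (T.val u) = u := congrArg (fun C : F →L[ℝ] F => C u) T.inv_mul
  have hu := (T⁻¹).val.le_of_opNorm_le hnorm (T.val u)
  rwa [hinv, ← hTu, ← div_eq_inv_mul, le_div_iff₀ hγ, mul_comm] at hu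

theorem notMem_spectrum_iff_exists_hasGap (hA : IsSelfAdjoint A) :
    E ∉ spectrum ℝ A ↔ ∃ γ > 0, HasGap A E γ := by
  refine ⟨fun hE => ?_, fun ⟨γ, hγ, h⟩ => h.notMem_spectrum hA hγ⟩
  obtain ⟨γ, hγ, hball⟩ :=
    Metric.mem_nhds_iff.1 ((spectrum.isClosed (𝕜 := ℝ) A).isOpen_compl.mem_nhds hE)
  exact ⟨γ, hγ, hasGap_of_disjoint_ball hA (disjoint_left.2 hball)⟩

theorem spectrum_nonempty_of_isSelfAdjoint [Nontrivial F] (hA : IsSelfAdjoint A) :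
    (spectrum ℝ A).Nonempty := by
  by_contra! hempty
  have : A = 0 := by
    rw [← norm_le_zero_iff]
    exact norm_le_of_forall_mem_spectrum hA le_rfl (by simp [hempty])
  simp [this] at hempty

theorem HasGap.mul_norm_apply_le (hA : IsSelfAdjoint A)
    (hpos : HasGap A (δ / 2) |δ / 2|) (hneg : HasGap A (-(δ / 2)) |-(δ / 2)|) (u : F) :
    δ * ‖A (A u)‖ ≤ ‖A (A (A u))‖ := by
  have h1 := hneg.two_mul_inner_le (A (A u) - δ • A u)
  have h2 := hpos.two_mul_inner_le (A (A u) + δ • A u)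
  have hinner : inner ℝ (A (A (A u))) (A u) = ‖A (A u)‖ ^ 2 := by
    rw [hA.isSymmetric.apply_clm, real_inner_self_eq_norm_sq]
  simp only [map_sub, map_add, map_smul] at h1 h2
  rw [norm_sub_sq_real, inner_sub_left, inner_sub_right, inner_sub_right] at h1
  rw [norm_add_sq_real, inner_add_left, inner_add_right, inner_add_right] at h2
  simp only [inner_smul_left, inner_smul_right, conj_trivial, hinner, norm_smul,
    real_inner_self_eq_norm_sq, Real.norm_eq_abs, mul_pow, sq_abs] at h1 h2
  have hsq : (δ * ‖A (A u)‖) ^ 2 ≤ ‖A (A (A u))‖ ^ 2 := by nlinarith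
  exact (abs_le_of_sq_le_sq' hsq (norm_nonneg _)).2

theorem orthogonal_ker_eq_closure_range_sq (hA : IsSelfAdjoint A) :
    (A.kerᗮ : Set F) = closure (range fun u => A (A u)) := by
  have hker : A.ker = (A ∘L A).ker := by
    ext x
    refine ⟨fun hx => by simp_all, fun hx => ?_⟩
    rw [LinearMap.mem_ker, ContinuousLinearMap.coe_coe, ← inner_self_eq_zero (𝕜 := ℝ),
      hA.isSymmetric.apply_clm]
    simp_all
  have hsq : (A ∘L A).adjoint = A ∘L A := by
    rw [ContinuousLinearMap.adjoint_comp, hA.adjoint_eq]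
  rw [hker, ContinuousLinearMap.orthogonal_ker, hsq]
  rfl

theorem le_norm_apply_of_mem_orthogonal_ker (hA : IsSelfAdjoint A)
    (h : spectrum ℝ A ∩ Metric.ball 0 δ ⊆ {0}) {v : F} (hv : v ∈ A.kerᗮ) :
    δ * ‖v‖ ≤ ‖A v‖ := by
  rcases le_or_gt δ 0 with hδ | hδ
  · exact (mul_nonpos_of_nonpos_of_nonneg hδ (norm_nonneg v)).trans (norm_nonneg _)
  have hgap : ∀ s, |s| = δ / 2 → HasGap A s |s| := fun s hs =>
    hasGap_of_disjoint_ball hA <| disjoint_left.2 fun t ht hts => by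
      rw [Metric.mem_ball, Real.dist_eq] at ht
      have ht0 : t = 0 := h ⟨hts, by rw [mem_ball_zero_iff, Real.norm_eq_abs]; grind⟩
      grind
  have hclosed : IsClosed {w : F | δ * ‖w‖ ≤ ‖A w‖} := isClosed_le (by fun_prop) (by fun_prop)
  have hrange : range (fun u => A (A u)) ⊆ {w : F | δ * ‖w‖ ≤ ‖A w‖} := by
    rintro _ ⟨u, rfl⟩
    exact HasGap.mul_norm_apply_le hA (hgap _ (by grind)) (hgap _ (by grind)) u
  exact hclosed.closure_subset_iff.2 hrange (orthogonal_ker_eq_closure_range_sq hA ▸ hv)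

theorem exists_apply_eq_smul_norm_sub_le (hA : IsSelfAdjoint A)
    (h : spectrum ℝ A ∩ Metric.ball E δ ⊆ {E}) (u : F) :
    ∃ w, A w = E • w ∧ δ * ‖u - w‖ ≤ ‖A u - E • u‖ := by
  let T : F →L[ℝ] F := A - algebraMap ℝ _ E
  have hT : IsSelfAdjoint T := hA.sub (.algebraMap _ (.all E))
  have hTu : ∀ v, T v = A v - E • v := fun v => by simp [T, Algebra.algebraMap_eq_smul_one]
  have hspec : spectrum ℝ T ∩ Metric.ball 0 δ ⊆ {0} := fun t ⟨ht, htδ⟩ => by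
    rw [show T = _ from sub_eq_neg_add .., ← spectrum.add_mem_iff] at ht
    simpa using h ⟨ht, by simpa using htδ⟩
  obtain ⟨w, hw, v, hv, rfl⟩ := T.ker.exists_add_mem_mem_orthogonal u
  have hw0 : T w = 0 := hw
  refine ⟨w, sub_eq_zero.1 ((hTu w).symm.trans hw0), ?_⟩
  rw [← hTu, map_add, hw0, zero_add, add_sub_cancel_left]
  exact le_norm_apply_of_mem_orthogonal_ker hT hspec hv

end SelfAdjoint

section Schrodinger

variable {W W' : ℤ →ᵇ ℝ} {E γ δ : ℝ}

instance : Nontrivial Ell2 :=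
  ⟨lp.single 2 0 1, 0, fun h => by simpa using congrArg (fun f : Ell2 => f 0) h⟩

theorem hasSum_sq (f : Ell2) : HasSum (fun n => f n ^ 2) (‖f‖ ^ 2) := by
  simpa using lp.hasSum_norm (p := 2) (by norm_num) f

theorem hasSum_sq_comp_add (f : Ell2) (a : ℤ) : HasSum (fun n => f (n + a) ^ 2) (‖f‖ ^ 2) :=
  (Equiv.addRight a).hasSum_iff.2 (hasSum_sq f)

theorem abs_apply_le_norm (f : Ell2) (n : ℤ) : |f n| ≤ ‖f‖ :=
  lp.norm_apply_le_norm (by norm_num) f n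

/-- Translation of square-summable sequences, `shift a f n = f (n + a)`. -/
def shift (a : ℤ) : Ell2 ≃ₗᵢ[ℝ] Ell2 where
  toFun f := ⟨fun n => f (n + a), memℓp_gen (by simpa using (hasSum_sq_comp_add f a).summable)⟩
  invFun f :=
    ⟨fun n => f (n + -a), memℓp_gen (by simpa using (hasSum_sq_comp_add f (-a)).summable)⟩
  map_add' _ _ := rfl
  map_smul' _ _ := rfl
  left_inv f := by ext n; simp
  right_inv f := by ext n; simp
  norm_map' f := (sq_eq_sq₀ (norm_nonneg _) (norm_nonneg _)).1
    ((hasSum_sq _).unique (hasSum_sq_comp_add f a))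

@[simp] theorem shift_apply (a : ℤ) (f : Ell2) (n : ℤ) : shift a f n = f (n + a) := rfl

theorem inner_shift_left (a : ℤ) (f g : Ell2) :
    inner ℝ (shift a f) g = inner ℝ f (shift (-a) g) := by
  rw [← (shift (-a)).inner_map_map (shift a f) g]
  congr 1
  ext n
  simp

/-- Multiplication of square-summable sequences by a bounded sequence. -/
def mulOp (W : ℤ →ᵇ ℝ) : Ell2 →L[ℝ] Ell2 :=
  lp.mapCLM 2 (fun n => W n • ContinuousLinearMap.id ℝ ℝ) (norm_nonneg W) fun n => by
    simpa [norm_smul] using W.norm_coe_le_norm n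

@[simp] theorem mulOp_apply (W : ℤ →ᵇ ℝ) (f : Ell2) (n : ℤ) : mulOp W f n = W n * f n := rfl

theorem norm_mulOp_le (W : ℤ →ᵇ ℝ) : ‖mulOp W‖ ≤ ‖W‖ := lp.norm_mapCLM_le ..

theorem inner_mulOp_left (W : ℤ →ᵇ ℝ) (f g : Ell2) :
    inner ℝ (mulOp W f) g = inner ℝ f (mulOp W g) := by
  rw [lp.inner_eq_tsum, lp.inner_eq_tsum]
  refine tsum_congr fun n => ?_
  simp only [mulOp_apply, Real.inner_apply]
  ring

/-- The discrete Schrödinger operator `Δ + W` on `ℓ²(ℤ)`. -/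
def schrodinger (W : ℤ →ᵇ ℝ) : Ell2 →L[ℝ] Ell2 :=
  (shift (-1) : Ell2 →L[ℝ] Ell2) + (shift 1 : Ell2 →L[ℝ] Ell2) + mulOp W

theorem schrodinger_apply (W : ℤ →ᵇ ℝ) (f : Ell2) (n : ℤ) :
    schrodinger W f n = f (n - 1) + f (n + 1) + W n * f n := rfl

theorem isSelfAdjoint_schrodinger (W : ℤ →ᵇ ℝ) : IsSelfAdjoint (schrodinger W) := by
  refine ContinuousLinearMap.isSelfAdjoint_iff_isSymmetric.2 fun f g => ?_
  change inner ℝ (shift (-1) f + shift 1 f + mulOp W f) g =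
    inner ℝ f (shift (-1) g + shift 1 g + mulOp W g)
  simp only [inner_add_left, inner_add_right, inner_shift_left, inner_mulOp_left, neg_neg]
  ring

theorem schrodingerSpectrum_eq_spectrum (W : ℤ →ᵇ ℝ) :
    SchrodingerSpectrum W = spectrum ℝ (schrodinger W) := by
  ext E
  have happly : ∀ f n, (schrodinger W - algebraMap ℝ (Ell2 →L[ℝ] Ell2) E) f n =
      f (n - 1) + f (n + 1) + (W n - E) * f n := fun f n => by
    rw [sub_mul, ← add_sub_assoc]
    rfl
  rw [SchrodingerSpectrum, mem_ofPred_eq, spectrum.mem_iff, IsUnit.sub_iff,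
    ContinuousLinearMap.isUnit_iff_bijective, not_iff_not]
  refine ⟨fun ⟨T, hT⟩ => ?_, fun h => ⟨.ofBijective _ h, happly⟩⟩
  convert T.bijective using 1
  ext f n
  rw [hT, happly]

theorem norm_schrodinger_sub_le (W W' : ℤ →ᵇ ℝ) : ‖schrodinger W - schrodinger W'‖ ≤ ‖W - W'‖ := by
  have : schrodinger W - schrodinger W' = mulOp (W - W') := by
    ext f n
    change schrodinger W f n - schrodinger W' f n = (W n - W' n) * f n
    rw [schrodinger_apply, schrodinger_apply]
    ring
  exact this ▸ norm_mulOp_le _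

theorem HasGap.schrodinger_congr (h : HasGap (schrodinger W) E γ) (hW : ‖W - W'‖ ≤ δ) :
    HasGap (schrodinger W') E (γ - δ) :=
  (h.perturb (schrodinger W') E).mono <| by
    have := norm_schrodinger_sub_le W W'
    rw [sub_self, abs_zero]
    linarith

theorem norm_schrodinger_le (W : ℤ →ᵇ ℝ) : ‖schrodinger W‖ ≤ 2 + ‖W‖ := by
  refine ContinuousLinearMap.opNorm_le_bound _ (by positivity) fun f => ?_
  calc ‖shift (-1) f + shift 1 f + mulOp W f‖
      ≤ ‖shift (-1) f‖ + ‖shift 1 f‖ + ‖mulOp W f‖ := norm_add₃_le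
    _ ≤ ‖f‖ + ‖f‖ + ‖W‖ * ‖f‖ := by
        rw [(shift _).norm_map, (shift _).norm_map]
        gcongr
        exact (mulOp W).le_of_opNorm_le (norm_mulOp_le W) f
    _ = (2 + ‖W‖) * ‖f‖ := by ring

/-- Translation of bounded sequences, `translatePot a W n = W (n + a)`. -/
def translatePot (a : ℤ) (W : ℤ →ᵇ ℝ) : ℤ →ᵇ ℝ :=
  W.compContinuous ⟨(· + a), continuous_of_discreteTopology⟩

@[simp] theorem translatePot_apply (a : ℤ) (W : ℤ →ᵇ ℝ) (n : ℤ) :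
    translatePot a W n = W (n + a) := rfl

theorem schrodinger_translatePot (a : ℤ) (W : ℤ →ᵇ ℝ) (f : Ell2) :
    schrodinger (translatePot a W) (shift a f) = shift a (schrodinger W f) := by
  ext n
  simp only [schrodinger_apply, shift_apply, translatePot_apply, sub_add_eq_add_sub, add_right_comm]

theorem hasGap_translatePot_iff {a : ℤ} :
    HasGap (schrodinger (translatePot a W)) E γ ↔ HasGap (schrodinger W) E γ := by
  refine ⟨fun h => h.of_semiconj (shift a) (schrodinger_translatePot a W),
    fun h => h.of_semiconj (shift (-a)) fun f => ?_⟩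
  rw [← schrodinger_translatePot]
  congr 2
  ext n
  simp

theorem isCompact_spectrum_schrodinger (W : ℤ →ᵇ ℝ) : IsCompact (spectrum ℝ (schrodinger W)) :=
  spectrum.isCompact _

theorem spectrum_schrodinger_subset_Icc (W : ℤ →ᵇ ℝ) :
    spectrum ℝ (schrodinger W) ⊆ Icc (-(2 + ‖W‖)) (2 + ‖W‖) := fun _ hE =>
  abs_le.1 ((spectrum.norm_le_norm_of_mem hE).trans (norm_schrodinger_le W))

end Schrodinger

section Preperfect

variable {W : ℤ →ᵇ ℝ} {E δ ε : ℝ}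

theorem eq_zero_of_schrodinger_eq_smul {w : Ell2} (hw : schrodinger W w = E • w) (h0 : w 0 = 0)
    (h1 : w 1 = 0) : w = 0 := by
  have hrec : ∀ n, w (n - 1) + w (n + 1) + W n * w n = E * w n := fun n => by
    rw [← schrodinger_apply, hw]
    rfl
  have hpair : ∀ n : ℤ, w n = 0 ∧ w (n + 1) = 0 := fun n => by
    induction n using Int.induction_on with
    | zero => exact ⟨h0, by simpa using h1⟩
    | succ n ih =>
      have := hrec (n + 1)
      rw [add_sub_cancel_right, ih.1, ih.2] at this
      exact ⟨ih.2, by linarith⟩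
    | pred n ih =>
      have := hrec (-n)
      rw [ih.1, ih.2] at this
      exact ⟨by linarith, by simpa using ih.1⟩
  ext n
  exact (hpair n).1

theorem exists_norm_le_of_schrodinger_eq_smul (W : ℤ →ᵇ ℝ) (E : ℝ) :
    ∃ C > 0, ∀ w, schrodinger W w = E • w → ‖w‖ ≤ C * max |w 0| |w 1| := by
  let K := Module.End.eigenspace (schrodinger W : Ell2 →ₗ[ℝ] Ell2) E
  let f : K →ₗ[ℝ] ℝ × ℝ :=
    { toFun := fun w => ((w : Ell2) 0, (w : Ell2) 1)
      map_add' := fun _ _ => rfl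
      map_smul' := fun _ _ => rfl }
  have hf : LinearMap.ker f = ⊥ := LinearMap.ker_eq_bot'.2 fun ⟨w, hw⟩ h0 =>
    Subtype.ext <| eq_zero_of_schrodinger_eq_smul (Module.End.mem_eigenspace_iff.1 hw)
      (congrArg Prod.fst h0) (congrArg Prod.snd h0)
  have : FiniteDimensional ℝ K := Module.Finite.of_injective f (LinearMap.ker_eq_bot.1 hf)
  obtain ⟨C, hC, hanti⟩ := f.exists_antilipschitzWith hf
  refine ⟨C, by exact_mod_cast hC, fun w hw => ?_⟩
  have := hanti.le_mul_dist ⟨w, Module.End.mem_eigenspace_iff.2 hw⟩ 0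
  rwa [map_zero, dist_zero_right, dist_zero_right] at this

theorem eventually_abs_apply_add_mul_le (f : Ell2) {p : ℕ} (hp : 0 < p) (hε : 0 < ε) (b : ℤ) :
    ∀ᶠ i : ℕ in atTop, |f (b + i * p)| ≤ ε := by
  have hinj : Function.Injective fun i : ℕ => b + (i : ℤ) * p := fun i j hij => by
    simpa [hp.ne'] using hij
  have hlim := ((hasSum_sq f).summable.comp_injective hinj).tendsto_atTop_zero
  filter_upwards [hlim.eventually (gt_mem_nhds (pow_pos hε 2))] with i hi
  exact abs_le_of_sq_le_sq hi.le hε.le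

theorem norm_schrodinger_shift_sub_le {f : Ell2} (hf : schrodinger W f = E • f) (a : ℤ) :
    ‖schrodinger W (shift a f) - E • shift a f‖ ≤ ‖W - translatePot a W‖ * ‖f‖ := by
  rw [← map_smul (shift a), ← hf, ← schrodinger_translatePot, ← (shift a).norm_map f]
  exact (schrodinger W - schrodinger (translatePot a W)).le_of_opNorm_le
    (norm_schrodinger_sub_le _ _) _

theorem exists_pos_forall_norm_sub_translatePot_le (hW : W ∈ LPZ) (hε : 0 < ε) :
    ∃ p : ℕ, 0 < p ∧ ∀ i : ℕ, ‖W - translatePot (i * p) W‖ ≤ ε := by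
  obtain ⟨V, ⟨p, hp, hV⟩, hWV⟩ := Metric.mem_closure_iff.1 hW (ε / 2) (by positivity)
  refine ⟨p, hp, fun i => (BoundedContinuousFunction.norm_le hε.le).2 fun n => ?_⟩
  have hper : V (n + i * p) = V n := (show Function.Periodic V (p : ℤ) from hV).int_mul i n
  have h1 := BoundedContinuousFunction.dist_coe_le_dist (f := W) (g := V) n
  have h2 := BoundedContinuousFunction.dist_coe_le_dist (f := W) (g := V) (n + i * p)
  rw [hper] at h2
  calc ‖W n - W (n + i * p)‖ = dist (W n) (W (n + i * p)) := (dist_eq_norm _ _).symm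
    _ ≤ dist (W n) (V n) + dist (W (n + i * p)) (V n) := dist_triangle_right _ _ _
    _ ≤ ε := by linarith

/-- A far translate of an eigenfunction by an almost period is almost an eigenfunction, hence close
to one; but it is almost zero at `0` and `1`, and these values control the eigenfunctions. -/
theorem eq_zero_of_schrodinger_eq_smul_of_isolated (hW : W ∈ LPZ) (hδ : 0 < δ)
    (h : spectrum ℝ (schrodinger W) ∩ Metric.ball E δ ⊆ {E}) {ψ : Ell2}
    (hψ : schrodinger W ψ = E • ψ) : ψ = 0 := by
  by_contra hψ0
  have hψpos : 0 < ‖ψ‖ := norm_pos_iff.2 hψ0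
  obtain ⟨C, hC, hker⟩ := exists_norm_le_of_schrodinger_eq_smul W E
  set θ : ℝ := 1 / (2 * C + 2)
  have hθ : 0 < θ := by positivity
  obtain ⟨p, hp, hap⟩ := exists_pos_forall_norm_sub_translatePot_le hW (mul_pos hδ hθ)
  have hdecay := eventually_abs_apply_add_mul_le ψ hp (mul_pos hθ hψpos)
  obtain ⟨i, hi0, hi1⟩ := ((hdecay 0).and (hdecay 1)).exists
  obtain ⟨w, hw, hclose⟩ :=
    exists_apply_eq_smul_norm_sub_le (isSelfAdjoint_schrodinger W) h (shift (i * p) ψ)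
  have hsub : ‖shift (i * p) ψ - w‖ ≤ θ * ‖ψ‖ := by
    refine le_of_mul_le_mul_left (hclose.trans ?_) hδ
    refine (norm_schrodinger_shift_sub_le hψ _).trans ?_
    rw [← mul_assoc]
    gcongr
    exact hap i
  have hwval : ∀ n : ℤ, |ψ (n + i * p)| ≤ θ * ‖ψ‖ → |w n| ≤ 2 * θ * ‖ψ‖ := fun n hn => by
    have hval := abs_apply_le_norm (shift (i * p) ψ - w) n
    rw [lp.coeFn_sub, Pi.sub_apply, shift_apply] at hval
    have := abs_sub_abs_le_abs_sub (w n) (ψ (n + i * p))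
    rw [abs_sub_comm] at this
    linarith
  have hwnorm : ‖w‖ ≤ C * (2 * θ * ‖ψ‖) :=
    (hker w hw).trans (by gcongr; exact max_le (hwval 0 hi0) (hwval 1 hi1))
  have hsum : ‖ψ‖ ≤ ‖w‖ + ‖shift (i * p) ψ - w‖ := by
    rw [← (shift (i * p)).norm_map ψ]
    exact norm_le_norm_add_norm_sub' ..
  have hθC : θ * (2 * C + 2) = 1 := one_div_mul_cancel (by positivity)
  nlinarith

theorem preperfect_spectrum_schrodinger (hW : W ∈ LPZ) :
    Preperfect (spectrum ℝ (schrodinger W)) := fun E hE => by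
  rw [accPt_iff_nhds]
  by_contra! hisolated
  obtain ⟨U, hU, hUE⟩ := hisolated
  obtain ⟨δ, hδ, hball⟩ := Metric.mem_nhds_iff.1 hU
  have hspec : spectrum ℝ (schrodinger W) ∩ Metric.ball E δ ⊆ {E} := fun t ⟨ht, htδ⟩ =>
    hUE t ⟨hball htδ, ht⟩
  refine HasGap.notMem_spectrum (γ := δ) (fun u => ?_) (isSelfAdjoint_schrodinger W) hδ hE
  obtain ⟨w, hw, hclose⟩ := exists_apply_eq_smul_norm_sub_le (isSelfAdjoint_schrodinger W) hspec u
  rwa [eq_zero_of_schrodinger_eq_smul_of_isolated hW hδ hspec hw, sub_zero] at hclose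

end Preperfect

section Restriction

variable {V : ℤ →ᵇ ℝ} {A B : Set ℤ}

/-- The projection of `ℓ²(ℤ)` onto the sequences supported in `A`. -/
def truncate (A : Set ℤ) : Ell2 →L[ℝ] Ell2 :=
  mulOp (BoundedContinuousFunction.indicator A (isClopen_discrete A))

theorem truncate_apply (A : Set ℤ) (u : Ell2) : truncate A u = A.indicator u := by
  ext n
  change A.indicator 1 n * u n = _
  by_cases hn : n ∈ A <;> simp [hn]

theorem norm_truncate_le (A : Set ℤ) (u : Ell2) : ‖truncate A u‖ ≤ ‖u‖ :=
  lp.norm_mono two_ne_zero fun n => by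
    rw [truncate_apply]
    exact norm_indicator_le_norm_self u n

theorem norm_truncate_sq_add_norm_truncate_sdiff_sq (h : B ⊆ A) (u : Ell2) :
    ‖truncate B u‖ ^ 2 + ‖truncate (A \ B) u‖ ^ 2 = ‖truncate A u‖ ^ 2 := by
  refine HasSum.unique ?_ (hasSum_sq _)
  convert (hasSum_sq (truncate B u)).add (hasSum_sq (truncate (A \ B) u)) using 2 with n
  simp only [truncate_apply]
  by_cases hB : n ∈ B
  · simp [hB, h hB]
  · by_cases hA : n ∈ A <;> simp [hB, hA]

theorem exists_apply_eq_abs_add_abs_add_abs (g h : Ell2) :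
    ∃ p : Ell2, (∀ n, p n = |g n| + (|h (n - 1)| + |h (n + 1)|)) ∧ ‖p‖ ≤ ‖g‖ + 2 * ‖h‖ := by
  have habs : ∀ f : Ell2, ∃ f' : Ell2, (∀ n, f' n = |f n|) ∧ ‖f'‖ ≤ ‖f‖ := fun f =>
    let f' : Ell2 := ⟨fun n => |f n|, memℓp_gen (by simpa using (hasSum_sq f).summable)⟩
    ⟨f', fun _ => rfl, lp.norm_mono two_ne_zero fun n => (norm_abs_eq_norm (f n)).le⟩
  obtain ⟨g', hg', hg'le⟩ := habs g
  obtain ⟨h', hh', hh'le⟩ := habs h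
  refine ⟨g' + (shift (-1) h' + shift 1 h'), fun n => ?_, ?_⟩
  · rw [← hg', ← hh', ← hh']
    rfl
  · have := norm_add_le g' (shift (-1) h' + shift 1 h')
    have := norm_add_le (shift (-1) h') (shift 1 h')
    rw [(shift _).norm_map, (shift _).norm_map] at this
    linarith

theorem abs_schrodinger_truncate_sub_le {D : Set ℤ}
    (hD : ∀ n, ¬(n ∈ A ↔ n + 1 ∈ A) → n ∈ D ∧ n + 1 ∈ D) (E : ℝ) (u : Ell2) (n : ℤ) :
    |schrodinger V (truncate A u) n - E * truncate A u n| ≤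
      |(schrodinger V u - E • u) n| + (|truncate D u (n - 1)| + |truncate D u (n + 1)|) := by
  change _ ≤ |schrodinger V u n - E * u n| + _
  have hleft : |A.indicator u (n - 1) - A.indicator (fun _ => u (n - 1)) n| ≤
      |D.indicator u (n - 1)| := by
    have := hD (n - 1)
    rw [sub_add_cancel] at this
    by_cases h1 : n ∈ A <;> by_cases h2 : n - 1 ∈ A <;> simp_all
  have hright : |A.indicator u (n + 1) - A.indicator (fun _ => u (n + 1)) n| ≤
      |D.indicator u (n + 1)| := by
    have := hD n
    by_cases h1 : n ∈ A <;> by_cases h2 : n + 1 ∈ A <;> simp_all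
  simp only [schrodinger_apply, truncate_apply] at hleft hright ⊢
  by_cases hn : n ∈ A
  · simp only [hn, indicator_of_mem] at hleft hright ⊢
    grind
  · simp only [hn, not_false_eq_true, indicator_of_notMem, sub_zero] at hleft hright ⊢
    grind

end Restriction

section Barrier

variable {V U : ℤ →ᵇ ℝ} {ρ : ℤ → ℤ} {E γ : ℝ}

theorem norm_schrodinger_truncate_sublevel_sub_le (hρ : ∀ n, |ρ (n + 1) - ρ n| ≤ 1) (r : ℤ)
    (u : Ell2) :
    ‖schrodinger V (truncate {n | ρ n < r} u) - E • truncate {n | ρ n < r} u‖ ≤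
      ‖schrodinger V u - E • u‖ +
        2 * ‖truncate ({n | ρ n < r + 1} \ {n | ρ n < r - 1}) u‖ := by
  obtain ⟨p, hp, hple⟩ := exists_apply_eq_abs_add_abs_add_abs (schrodinger V u - E • u)
    (truncate ({n | ρ n < r + 1} \ {n | ρ n < r - 1}) u)
  refine le_trans (lp.norm_mono two_ne_zero fun n => ?_) hple
  rw [hp]
  refine le_trans ?_ (le_abs_self _)
  refine abs_schrodinger_truncate_sub_le (fun n hn => ?_) E u n
  have := abs_le.1 (hρ n)
  simp only [mem_ofPred_eq, Set.mem_sdiff] at hn ⊢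
  omega

theorem mul_norm_truncate_sublevel_sq_le (hU : HasGap (schrodinger U) E γ) (hγ : 0 ≤ γ)
    (hρ : ∀ n, |ρ (n + 1) - ρ n| ≤ 1) {r : ℤ} (hUV : ∀ n, ρ n < r → U n = V n) (u : Ell2) :
    (1 + γ ^ 2 / 8) * ‖truncate {n | ρ n < r - 1} u‖ ^ 2 ≤
      ‖truncate {n | ρ n < r + 1} u‖ ^ 2 + ‖schrodinger V u - E • u‖ ^ 2 / 4 := by
  have hinner : {n | ρ n < r - 1} ⊆ {n | ρ n < r} := fun n hn => by grind
  have houter : {n | ρ n < r - 1} ⊆ {n | ρ n < r + 1} := fun n hn => by grind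
  have hmono := norm_truncate_sq_add_norm_truncate_sdiff_sq hinner u
  have hsplit := norm_truncate_sq_add_norm_truncate_sdiff_sq houter u
  have hagree : schrodinger U (truncate {n | ρ n < r} u) =
      schrodinger V (truncate {n | ρ n < r} u) := by
    ext n
    by_cases hn : ρ n < r
    · simp only [schrodinger_apply, hUV n hn]
    · simp [schrodinger_apply, truncate_apply, hn]
  have hgap : γ * ‖truncate {n | ρ n < r} u‖ ≤ ‖schrodinger V u - E • u‖ +
      2 * ‖truncate ({n | ρ n < r + 1} \ {n | ρ n < r - 1}) u‖ := by
    refine (hU _).trans ?_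
    rw [hagree]
    exact norm_schrodinger_truncate_sublevel_sub_le hρ r u
  have hsq := pow_le_pow_left₀ (by positivity) hgap 2
  nlinarith [sq_nonneg (‖schrodinger V u - E • u‖ -
      2 * ‖truncate ({n | ρ n < r + 1} \ {n | ρ n < r - 1}) u‖),
    mul_nonneg (sq_nonneg γ) (sq_nonneg ‖truncate ({n | ρ n < r} \ {n | ρ n < r - 1}) u‖)]

theorem le_inv_pow_mul_add_div {f : ℕ → ℝ} {b c : ℝ} (hc : 0 < c) {j : ℕ}
    (hf : ∀ i < j, (1 + c) * f i ≤ f (i + 1) + b) :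
    f 0 ≤ (1 + c)⁻¹ ^ j * f j + (1 - (1 + c)⁻¹ ^ j) * (b / c) := by
  induction j with
  | zero => simp
  | succ j ih =>
    have hstep : f j - b / c ≤ (1 + c)⁻¹ * (f (j + 1) - b / c) := by
      rw [inv_mul_eq_div, le_div_iff₀ (by positivity)]
      have := hf j j.lt_succ_self
      have : b / c * (1 + c) = b / c + b := by field_simp
      linarith
    have hpow := mul_le_mul_of_nonneg_left hstep (show 0 ≤ (1 + c)⁻¹ ^ j by positivity)
    have := ih fun i hi => hf i (hi.trans j.lt_succ_self)
    rw [← mul_assoc, ← pow_succ] at hpow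
    linarith

/-- The base of the exponential decay across a barrier on which `H - E` is bounded below by `γ`. -/
def decayRate (γ : ℝ) : ℝ := (1 + γ ^ 2 / 8)⁻¹

theorem decayRate_pos (γ : ℝ) : 0 < decayRate γ := by unfold decayRate; positivity

theorem decayRate_lt_one (hγ : 0 < γ) : decayRate γ < 1 :=
  inv_lt_one_of_one_lt₀ (lt_add_of_pos_right 1 (by positivity))

theorem norm_truncate_le_decayRate_pow_mul_add (hU : HasGap (schrodinger U) E γ) (hγ : 0 < γ)
    (hρ : ∀ n, |ρ (n + 1) - ρ n| ≤ 1) {N : ℕ} (hUV : ∀ n, ρ n < 4 * N → U n = V n) (u : Ell2) :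
    ‖truncate {n | ρ n < 1} u‖ ≤
      decayRate γ ^ N * ‖u‖ + 2 / γ * ‖schrodinger V u - E • u‖ := by
  have hstep : ∀ i < 2 * N, (1 + γ ^ 2 / 8) * ‖truncate {n | ρ n < 2 * (i : ℕ) + 1} u‖ ^ 2 ≤
      ‖truncate {n | ρ n < 2 * (i + 1 : ℕ) + 1} u‖ ^ 2 + ‖schrodinger V u - E • u‖ ^ 2 / 4 :=
    fun i hi => by
      convert mul_norm_truncate_sublevel_sq_le (r := 2 * i + 2) hU hγ.le hρ
        (fun n hn => hUV n (by omega)) u using 6 <;> push_cast <;> ring_nf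
  have hiter := le_inv_pow_mul_add_div (by positivity) hstep
  have hu := norm_truncate_le {n | ρ n < 2 * (2 * N : ℕ) + 1} u
  have hpow : decayRate γ ^ (2 * N) * ‖truncate {n | ρ n < 2 * (2 * N : ℕ) + 1} u‖ ^ 2 ≤
      (decayRate γ ^ N * ‖u‖) ^ 2 := by
    rw [mul_pow, ← pow_mul, mul_comm N]
    have := decayRate_pos γ
    gcongr
  have hforcing : ‖schrodinger V u - E • u‖ ^ 2 / 4 / (γ ^ 2 / 8) ≤
      (2 / γ * ‖schrodinger V u - E • u‖) ^ 2 := by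
    rw [div_div, mul_pow, div_pow, div_mul_eq_mul_div, div_le_div_iff₀ (by positivity)
      (by positivity)]
    nlinarith [mul_nonneg (sq_nonneg γ) (sq_nonneg ‖schrodinger V u - E • u‖)]
  have hx := decayRate_pos γ
  have hfactor : (1 - decayRate γ ^ (2 * N)) * (‖schrodinger V u - E • u‖ ^ 2 / 4 / (γ ^ 2 / 8)) ≤
      ‖schrodinger V u - E • u‖ ^ 2 / 4 / (γ ^ 2 / 8) :=
    mul_le_of_le_one_left (by positivity) (sub_le_self _ (by positivity))
  rw [show 2 * ((0 : ℕ) : ℤ) + 1 = 1 by norm_num] at hiter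
  refine (abs_le_of_sq_le_sq' ?_ (by positivity)).2
  nlinarith [show 0 ≤ decayRate γ ^ N * ‖u‖ * (2 / γ * ‖schrodinger V u - E • u‖) by positivity,
    hiter.trans (add_le_add hpow hfactor)]

end Barrier

section Boxes

variable {V U : ℤ →ᵇ ℝ} {Q : ℕ} {E τ γ : ℝ}

/-- The restriction of `Δ + V` to `{0, …, Q - 1}` with Dirichlet boundary conditions. -/
def boxMatrix (V : ℤ →ᵇ ℝ) (Q : ℕ) : Matrix (Fin Q) (Fin Q) ℝ :=
  Matrix.of fun a b => schrodinger V (lp.single 2 (b : ℤ) 1) (a : ℤ)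

theorem isHermitian_boxMatrix (V : ℤ →ᵇ ℝ) (Q : ℕ) : (boxMatrix V Q).IsHermitian := by
  have hentry : ∀ a b, boxMatrix V Q a b = inner ℝ (lp.single 2 (a : ℤ) (1 : ℝ) : Ell2)
      (schrodinger V (lp.single 2 (b : ℤ) 1)) := fun a b => by
    rw [lp.inner_single_left]
    simp [boxMatrix]
  ext a b
  rw [Matrix.conjTranspose_apply, star_trivial, hentry, hentry, real_inner_comm,
    (isSelfAdjoint_schrodinger V).isSymmetric.apply_clm]

theorem boxMatrix_mulVec {f : Ell2} (hf : ∀ n ∉ Ico (0 : ℤ) Q, f n = 0) (a : Fin Q) :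
    (boxMatrix V Q).mulVec (fun b => f (b : ℤ)) a = schrodinger V f (a : ℤ) := by
  have hsum : f = ∑ b : Fin Q, f (b : ℤ) • lp.single 2 (b : ℤ) (1 : ℝ) := by
    ext n
    simp only [lp.coeFn_sum, Finset.sum_apply, lp.coeFn_smul, Pi.smul_apply, lp.single_apply]
    by_cases hn : n ∈ Ico (0 : ℤ) Q
    · lift n to ℕ using hn.1
      rw [Finset.sum_eq_single (⟨n, by exact_mod_cast hn.2⟩ : Fin Q)] <;>
        simp +contextual [Fin.ext_iff, eq_comm]
    · rw [hf n hn, Finset.sum_eq_zero]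
      rintro b -
      have : n ≠ b := fun h => hn (h ▸ ⟨by positivity, by exact_mod_cast b.2⟩)
      simp [this]
  conv_rhs => rw [hsum]
  simp only [map_sum, map_smul, lp.coeFn_sum, Finset.sum_apply, lp.coeFn_smul, Pi.smul_apply]
  simp [Matrix.mulVec, dotProduct, boxMatrix, mul_comm]

theorem mul_sum_sq_le_sum_sq_of_disjoint_spectrum_boxMatrix (hτ : 0 ≤ τ)
    (h : Disjoint (Metric.ball E τ) (spectrum ℝ (boxMatrix V Q))) {f : Ell2}
    (hf : ∀ n ∉ Ico (0 : ℤ) Q, f n = 0) :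
    τ ^ 2 * ∑ a : Fin Q, f (a : ℤ) ^ 2 ≤
      ∑ a : Fin Q, (schrodinger V f (a : ℤ) - E * f (a : ℤ)) ^ 2 := by
  let T := Matrix.toEuclideanCLM (n := Fin Q) (𝕜 := ℝ) (boxMatrix V Q)
  have hT : IsSelfAdjoint T := (isHermitian_boxMatrix V Q).isSelfAdjoint.map _
  have hspec : spectrum ℝ T = spectrum ℝ (boxMatrix V Q) := AlgEquiv.spectrum_eq _ _
  have hgap := hasGap_of_disjoint_ball hT (hspec ▸ h) (WithLp.toLp 2 fun a => f (a : ℤ))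
  have hsq := pow_le_pow_left₀ (by positivity) hgap 2
  rw [mul_pow, EuclideanSpace.norm_sq_eq, EuclideanSpace.norm_sq_eq] at hsq
  simpa [T, boxMatrix_mulVec hf] using hsq

theorem exists_card_le_spectrum_boxMatrix_subset (V : ℤ →ᵇ ℝ) (Q : ℕ) :
    ∃ t : Finset ℝ, t.card ≤ Q ∧ spectrum ℝ (boxMatrix V Q) ⊆ t := by
  classical
  refine ⟨Finset.univ.image (isHermitian_boxMatrix V Q).eigenvalues,
    Finset.card_image_le.trans (Finset.card_fin Q).le, ?_⟩
  rw [(isHermitian_boxMatrix V Q).spectrum_real_eq_range_eigenvalues]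
  simp

theorem hasSum_sum_box (hQ : 0 < Q) (f : Ell2) :
    HasSum (fun i : ℤ => ∑ a : Fin Q, f (a + i * Q) ^ 2) (‖f‖ ^ 2) := by
  have : NeZero Q := ⟨hQ.ne'⟩
  refine ((Int.divModEquiv Q).symm.hasSum_iff.2 (hasSum_sq f)).prod_fiberwise fun i => ?_
  convert hasSum_fintype _ using 1
  exact Finset.sum_congr rfl fun a _ => by simp [Int.divModEquiv_symm_apply, add_comm]

/-- The distance from `n` to the end points of the box `[iQ, (i + 1)Q)` that contains it. -/
def cutDist (Q : ℕ) (n : ℤ) : ℤ := min (n % Q) (Q - 1 - n % Q)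

theorem emod_add_one_cases (hQ : 0 < Q) (n : ℤ) :
    (n % Q = Q - 1 ∧ (n + 1) % Q = 0) ∨ ((n + 1) % Q = n % Q + 1 ∧ (n + 1) / Q = n / Q) := by
  have hnonneg := Int.emod_nonneg n (Int.natCast_pos.2 hQ).ne'
  have hlt := Int.emod_lt_of_pos n (Int.natCast_pos.2 hQ)
  have hdiv := Int.emod_add_mul_ediv n Q
  rcases eq_or_ne (n % (Q : ℤ)) (Q - 1) with h | h
  · refine .inl ⟨h, ?_⟩
    rw [← Int.emod_add_emod, h, sub_add_cancel, Int.emod_self]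
  · obtain ⟨hd, hm⟩ := (Int.ediv_emod_unique (a := n + 1) (r := n % Q + 1) (q := n / Q)
      (Int.natCast_pos.2 hQ)).2 ⟨by linarith, by omega, by omega⟩
    exact .inr ⟨hm, hd⟩

theorem abs_cutDist_add_one_sub_le (hQ : 0 < Q) (n : ℤ) :
    |cutDist Q (n + 1) - cutDist Q n| ≤ 1 := by
  unfold cutDist
  grind [emod_add_one_cases hQ n]

theorem mul_norm_le_of_disjoint_spectrum_boxMatrix (hQ : 0 < Q) (hV : Function.Periodic V Q)
    (hτ : 0 ≤ τ) (h : Disjoint (Metric.ball E τ) (spectrum ℝ (boxMatrix V Q))) (u : Ell2) :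
    τ * ‖u‖ ≤ ‖schrodinger V u - E • u‖ + 2 * ‖truncate {n | cutDist Q n < 1} u‖ := by
  obtain ⟨p, hp, hple⟩ := exists_apply_eq_abs_add_abs_add_abs (schrodinger V u - E • u)
    (truncate {n | cutDist Q n < 1} u)
  refine le_trans (abs_le_of_sq_le_sq' ?_ (norm_nonneg p)).2 hple
  rw [mul_pow]
  refine hasSum_le (fun i => ?_) ((hasSum_sum_box hQ u).mul_left (τ ^ 2)) (hasSum_sum_box hQ p)
  have hbdry : ∀ n, ¬(n ∈ {n : ℤ | n / Q = i} ↔ n + 1 ∈ {n : ℤ | n / Q = i}) →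
      n ∈ {n | cutDist Q n < 1} ∧ n + 1 ∈ {n | cutDist Q n < 1} := fun n hn => by
    simp only [mem_ofPred_eq, cutDist] at hn ⊢
    grind [emod_add_one_cases hQ n]
  have hdiv : ∀ a : ℤ, (a + i * Q) / Q = i ↔ a ∈ Ico (0 : ℤ) Q := fun a => by
    rw [Int.ediv_eq_iff_of_pos (by omega), mem_Ico]
    omega
  have hshift : ∀ f, schrodinger V (shift (i * Q) f) = shift (i * Q) (schrodinger V f) := by
    have htrans : translatePot (i * Q) V = V := by
      ext n
      exact hV.int_mul i n
    simpa only [htrans] using schrodinger_translatePot (i * Q) V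
  have hbox := mul_sum_sq_le_sum_sq_of_disjoint_spectrum_boxMatrix hτ h
    (f := shift (i * Q) (truncate {n | n / Q = i} u)) fun n hn => by
      simp [truncate_apply, hdiv, -mem_Ico, hn]
  have hbox_u : ∀ a : Fin Q, truncate {n | n / Q = i} u (a + i * Q) = u (a + i * Q) := fun a => by
    rw [truncate_apply, indicator_of_mem]
    exact (hdiv a).2 ⟨by positivity, by exact_mod_cast a.2⟩
  simp only [hshift, shift_apply, hbox_u] at hbox
  refine hbox.trans (Finset.sum_le_sum fun a _ => ?_)
  rw [← hbox_u a]
  refine sq_le_sq.2 ?_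
  rw [hp]
  exact (abs_schrodinger_truncate_sub_le hbdry E u _).trans (le_abs_self _)

end Boxes

theorem hasGap_of_barriers {V U : ℤ →ᵇ ℝ} {Q N : ℕ} {E γ : ℝ} (hQ : 0 < Q)
    (hV : Function.Periodic V Q) (hγ : 0 < γ) (hU : HasGap (schrodinger U) E γ)
    (hUV : ∀ n, cutDist Q n < 4 * N → U n = V n)
    (h : Disjoint (Metric.ball E (4 * decayRate γ ^ N)) (spectrum ℝ (boxMatrix V Q))) :
    HasGap (schrodinger V) E (2 * decayRate γ ^ N / (1 + 4 / γ)) := fun u => by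
  have hx := decayRate_pos γ
  have hbox := mul_norm_le_of_disjoint_spectrum_boxMatrix hQ hV (by positivity) h u
  have hbarrier :=
    norm_truncate_le_decayRate_pow_mul_add hU hγ (abs_cutDist_add_one_sub_le hQ) hUV u
  have hdiv : 2 * (2 / γ * ‖schrodinger V u - E • u‖) = 4 / γ * ‖schrodinger V u - E • u‖ := by ring
  rw [div_mul_eq_mul_div, div_le_iff₀ (by positivity)]
  linarith

theorem exists_card_le_forall_hasGap_of_barriers {ι : Type*} [Fintype ι] {U : ι → ℤ →ᵇ ℝ}
    {V : ℤ →ᵇ ℝ} {c : ι → ℤ} {Q N : ℕ} {γ : ℝ} (hQ : 0 < Q) (hV : Function.Periodic V Q)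
    (hγ : 0 < γ) (hUV : ∀ j n, cutDist Q n < 4 * N → U j (n + c j) = V (n + c j)) :
    ∃ t : Finset ℝ, t.card ≤ Fintype.card ι * Q ∧
      ∀ E, (∃ j, HasGap (schrodinger (U j)) E γ) →
        Disjoint (Metric.ball E (4 * decayRate γ ^ N)) t →
          HasGap (schrodinger V) E (2 * decayRate γ ^ N / (1 + 4 / γ)) := by
  classical
  choose t ht hspec using fun j =>
    exists_card_le_spectrum_boxMatrix_subset (translatePot (c j) V) Q
  refine ⟨Finset.univ.biUnion t, Finset.card_biUnion_le_card_mul _ _ _ fun j _ => ht j, ?_⟩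
  rintro E ⟨j, hj⟩ hdisj
  rw [← hasGap_translatePot_iff (a := c j)] at hj ⊢
  refine hasGap_of_barriers hQ (fun n => ?_) hγ hj (hUV j) (hdisj.mono_right ?_)
  · simp only [translatePot_apply, add_right_comm n, hV (n + c j)]
  · exact (hspec j).trans
      (Finset.coe_subset.2 (Finset.subset_biUnion_of_mem t (Finset.mem_univ j)))

section Concatenation

variable {α : Type*} {m : ℕ}

theorem perExt_mem [Zero α] (hm : 0 < m) {w : Fin m → α} {A : Set α} (h : ∀ i, w i ∈ A) (n : ℤ) :
    perExt w n ∈ A := by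
  rw [perExt, dif_pos hm]
  exact h _

theorem perExt_periodic [Zero α] (w : Fin m → α) : Function.Periodic (perExt w) m := fun n => by
  simp only [perExt, Int.add_emod_right]

theorem perExt_fin_add_mul [Zero α] (w : Fin m → α) (j : Fin m) (t : ℤ) :
    perExt w (j + t * m) = w j := by
  rw [show perExt w (j + t * m) = perExt w j from (perExt_periodic w).int_mul t j, perExt,
    dif_pos j.pos]
  congr
  rw [Int.emod_eq_of_lt (by positivity) (by exact_mod_cast j.2), Int.toNat_natCast]

theorem perExt_eq_of_periodic [Zero α] (hm : 0 < m) {f : ℤ → α} (h : Function.Periodic f m) :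
    perExt (fun i : Fin m => f i) = f := by
  ext n
  have hn : ((n % m).toNat : ℤ) = n % m := Int.toNat_of_nonneg (Int.emod_nonneg n (by omega))
  rw [perExt, dif_pos hm, hn, Int.emod_def, mul_comm, ← smul_eq_mul, h.sub_zsmul_eq]

/-- The concatenation of stretches of length `L` of the sequences `P 0, …, P (m - 1)`, repeated
periodically. The stretch `[iL, (i + 1)L)` carries the values of `P (i mod m)` at these positions,
without any shift. -/
def concat [Zero α] (P : Fin m → ℤ → α) (L : ℕ) : ℤ → α := fun n => perExt P (n / L) n

theorem exists_concat_apply_eq [Zero α] (hm : 0 < m) (P : Fin m → ℤ → α) (L : ℕ) (n : ℤ) :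
    ∃ j, concat P L n = P j n := by
  obtain ⟨j, hj⟩ := perExt_mem hm (w := P) (fun j => mem_range_self j) (n / L)
  exact ⟨j, by rw [hj, concat]⟩

theorem concat_periodic [Zero α] {P : Fin m → ℤ → α} {L : ℕ} (hL : 0 < L)
    (hP : ∀ j, Function.Periodic (P j) L) : Function.Periodic (concat P L) (m * L : ℕ) := by
  intro n
  rcases m.eq_zero_or_pos with rfl | hm
  · simp
  have hdiv : (n + (m * L : ℕ)) / L = n / L + m := by
    rw [Nat.cast_mul, Int.add_mul_ediv_right _ _ (by omega)]
  obtain ⟨j, hj⟩ := perExt_mem hm (w := P) (fun j => mem_range_self j) (n / L)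
  rw [concat, concat, hdiv, perExt_periodic P, ← hj, Nat.cast_mul]
  exact (hP j).int_mul m n

theorem concat_eq_of_cutDist_lt [Zero α] (P : Fin m → ℤ → α) {R : ℕ} (hR : 0 < R) (j : Fin m)
    {n : ℤ} (hn : cutDist (m * (2 * R)) n < R) :
    concat P (2 * R) (n + (2 * j + 1) * R) = P j (n + (2 * j + 1) * R) := by
  suffices h : ∃ t : ℤ, (n + (2 * j + 1) * R) / (2 * R : ℕ) = j + t * m by
    obtain ⟨t, ht⟩ := h
    rw [concat, ht, perExt_fin_add_mul]
  have hQ : (0 : ℤ) < (m * (2 * R) : ℕ) := by have := j.pos; positivity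
  have hnonneg := Int.emod_nonneg n hQ.ne'
  have hlt := Int.emod_lt_of_pos n hQ
  have hdiv := Int.emod_add_mul_ediv n (m * (2 * R) : ℕ)
  rcases min_lt_iff.1 hn with h | h
  · refine ⟨n / (m * (2 * R) : ℕ), ?_⟩
    rw [Int.ediv_eq_iff_of_pos (by positivity)]
    push_cast at *
    constructor <;> linarith
  · refine ⟨n / (m * (2 * R) : ℕ) + 1, ?_⟩
    rw [Int.ediv_eq_iff_of_pos (by positivity)]
    push_cast at *
    constructor <;> linarith

end Concatenation

section Aggregate

variable {k m : ℕ}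

theorem agg_add (x y : ℤ → Fin k → ℝ) : agg k (x + y) = agg k x + agg k y := by
  ext n
  by_cases hk : 0 < k <;> simp [agg, hk]

theorem agg_smul (c : ℝ) (x : ℤ → Fin k → ℝ) : agg k (c • x) = c • agg k x := by
  ext n
  by_cases hk : 0 < k <;> simp [agg, hk]

theorem abs_agg_le (x : ℤ → Fin k → ℝ) (n : ℤ) : |agg k x n| ≤ ‖x (n / k)‖ := by
  unfold agg
  split_ifs
  · rw [Int.fdiv_eq_ediv_of_nonneg _ k.cast_nonneg]
    exact norm_le_pi_norm (x (n / k)) _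
  · simp

theorem agg_periodic {x : ℤ → Fin k → ℝ} {q : ℕ} (hx : Function.Periodic x q) :
    Function.Periodic (agg k x) (q * k : ℕ) := fun n => by
  unfold agg
  split_ifs with hk
  · simp only [Int.fdiv_eq_ediv_of_nonneg _ k.cast_nonneg, Nat.cast_mul,
      Int.add_mul_emod_self_right, Int.add_mul_ediv_right _ _ (show (k : ℤ) ≠ 0 by omega),
      hx (n / k)]
  · rfl

theorem agg_concat (P : Fin m → ℤ → Fin k → ℝ) (L : ℕ) :
    agg k (concat P L) = concat (fun j => agg k (P j)) (k * L) := by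
  ext n
  by_cases hk : 0 < k <;> by_cases hm : 0 < m <;>
    simp [agg, concat, perExt, hk, hm, Int.fdiv_eq_ediv_of_nonneg, Int.ediv_ediv_of_nonneg]

/-- The map `y ↦ y^♮` from bounded block sequences to bounded potentials. -/
def aggregate (k : ℕ) : (ℤ →ᵇ (Fin k → ℝ)) →L[ℝ] (ℤ →ᵇ ℝ) :=
  LinearMap.mkContinuous
    { toFun := fun y => ofNormedAddCommGroupDiscrete (agg k y) ‖y‖ fun n =>
        (abs_agg_le y n).trans (y.norm_coe_le_norm _)
      map_add' := fun y z => DFunLike.coe_injective (agg_add y z)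
      map_smul' := fun c y => DFunLike.coe_injective (agg_smul c y) }
    1 fun y => by
      rw [one_mul]
      exact (BoundedContinuousFunction.norm_le (norm_nonneg y)).2 fun n =>
        (abs_agg_le y n).trans (y.norm_coe_le_norm _)

theorem coe_aggregate (y : ℤ →ᵇ (Fin k → ℝ)) : ⇑(aggregate k y) = agg k y := rfl

theorem norm_aggregate_le (y : ℤ →ᵇ (Fin k → ℝ)) : ‖aggregate k y‖ ≤ ‖y‖ :=
  ((aggregate k).le_of_opNorm_le (LinearMap.mkContinuous_norm_le _ zero_le_one _) y).trans_eq
    (one_mul _)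

theorem smul_aggregate_mem_LPZ (hk : 0 < k) {Y : Set (Fin k → ℝ)} (lam : ℝ)
    {y : ℤ →ᵇ (Fin k → ℝ)} (hy : y ∈ LPY k Y) : lam • aggregate k y ∈ LPZ := by
  refine map_mem_closure (f := lam • aggregate k) (lam • aggregate k).continuous hy ?_
  rintro z ⟨⟨q, hq, hz⟩, -⟩
  exact ⟨q * k, by positivity, (agg_periodic hz).smul lam⟩

end Aggregate

section GapFamilies

variable {k : ℕ} {Y : Set (Fin k → ℝ)} {S K C : Set ℝ} {X : ℤ →ᵇ (Fin k → ℝ)} {ε : ℝ}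

theorem exists_coe_eq_of_dist_le {β : Type*} [SeminormedAddCommGroup β] (X : ℤ →ᵇ β) {f : ℤ → β}
    (hε : 0 ≤ ε) (h : ∀ n, dist (f n) (X n) ≤ ε) : ∃ P : ℤ →ᵇ β, ⇑P = f ∧ dist P X ≤ ε := by
  refine ⟨ofNormedAddCommGroupDiscrete f (ε + ‖X‖) fun n => ?_, rfl,
    (BoundedContinuousFunction.dist_le hε).2 h⟩
  have htri := norm_le_norm_sub_add (f n) (X n)
  rw [← dist_eq_norm] at htri
  exact htri.trans (add_le_add (h n) (X.norm_coe_le_norm n))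

theorem exists_mem_perY_hasGap {lam : ℝ} (hlam : lam ≠ 0)
    (hGR : GapRich k ((fun w => lam • w) '' Y) S) (hX : X ∈ PerY k Y) {E : ℝ} (hE : E ∉ S)
    (hε : 0 < ε) :
    ∃ P ∈ PerY k Y, dist P X ≤ ε ∧ ∃ γ > 0, HasGap (schrodinger (lam • aggregate k P)) E γ := by
  obtain ⟨⟨q, hq, hXq⟩, hXY⟩ := hX
  obtain ⟨l, hl, y, hyY, hdist, hgap⟩ := hGR.2 E hE q hq (fun i => lam • X i)
    (fun i => ⟨_, hXY _, rfl⟩) (|lam| * ε) (by positivity)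
  rw [perExt_eq_of_periodic hq (f := fun n => lam • X n) fun n => by simp only [hXq]] at hdist
  obtain ⟨P, hP, hPX⟩ := exists_coe_eq_of_dist_le X (f := lam⁻¹ • perExt y) hε.le fun n => by
    have h := hdist n
    rw [← smul_inv_smul₀ hlam (perExt y n), dist_smul₀, Real.norm_eq_abs, dist_comm] at h
    exact (lt_of_mul_lt_mul_left h (abs_nonneg _)).le
  have hagg : ⇑(lam • aggregate k P) = agg k (perExt y) := by
    rw [BoundedContinuousFunction.coe_smul, coe_aggregate, hP, agg_smul]
    exact smul_inv_smul₀ hlam _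
  refine ⟨P, ⟨⟨l, hl, fun n => ?_⟩, fun n => ?_⟩, hPX, ?_⟩
  · rw [hP]
    exact congrArg (lam⁻¹ • ·) (perExt_periodic y n)
  · obtain ⟨w, hw, hwy⟩ := perExt_mem hl hyY n
    rw [hP, Pi.smul_apply, ← hwy, inv_smul_smul₀ hlam]
    exact hw
  · rwa [← hagg, schrodingerSpectrum_eq_spectrum,
      notMem_spectrum_iff_exists_hasGap (isSelfAdjoint_schrodinger _)] at hgap

theorem exists_finite_uniform_of_isCompact {β ι : Type*} [TopologicalSpace β] {T : Set β}
    (hT : IsCompact T) {A : Set ι} {p : ι → ℝ → β → Prop}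
    (hp : ∀ {i γ γ' b}, p i γ b → γ' ≤ γ → p i γ' b)
    (h : ∀ b ∈ T, ∃ i ∈ A, ∃ γ > 0, ∀ᶠ b' in 𝓝 b, p i γ b') :
    ∃ F ⊆ A, F.Finite ∧ ∃ γ > 0, ∀ b ∈ T, ∃ i ∈ F, p i γ b := by
  refine hT.induction_on (p := fun T => ∃ F ⊆ A, F.Finite ∧ ∃ γ > 0, ∀ b ∈ T, ∃ i ∈ F, p i γ b)
    ⟨∅, empty_subset _, finite_empty, 1, one_pos, by simp⟩ ?_ ?_ fun b hb => ?_
  · rintro T T' hTT' ⟨F, hFA, hF, γ, hγ, hcov⟩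
    exact ⟨F, hFA, hF, γ, hγ, fun b hb => hcov b (hTT' hb)⟩
  · rintro T T' ⟨F, hFA, hF, γ, hγ, hcov⟩ ⟨F', hFA', hF', γ', hγ', hcov'⟩
    refine ⟨F ∪ F', union_subset hFA hFA', hF.union hF', min γ γ', lt_min hγ hγ', ?_⟩
    rintro b (hb | hb)
    · obtain ⟨i, hi, hb⟩ := hcov b hb
      exact ⟨i, .inl hi, hp hb (min_le_left _ _)⟩
    · obtain ⟨i, hi, hb⟩ := hcov' b hb
      exact ⟨i, .inr hi, hp hb (min_le_right _ _)⟩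
  · obtain ⟨i, hi, γ, hγ, hev⟩ := h b hb
    exact ⟨_, mem_nhdsWithin_of_mem_nhds hev, {i}, singleton_subset_iff.2 hi, finite_singleton i,
      γ, hγ, fun b' hb' => ⟨i, rfl, hb'⟩⟩

theorem HasGap.eventually_hasGap_smul {W : ℤ →ᵇ ℝ} {lam E γ : ℝ} (hγ : 0 < γ)
    (h : HasGap (schrodinger (lam • W)) E γ) :
    ∀ᶠ t : ℝ × ℝ in 𝓝 (lam, E), HasGap (schrodinger (t.1 • W)) t.2 (γ / 2) := by
  have hcont : ContinuousAt (fun t : ℝ × ℝ => ‖lam • W - t.1 • W‖ + |E - t.2|) (lam, E) := by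
    fun_prop
  have hlt : ‖lam • W - lam • W‖ + |E - E| < γ / 2 := by simpa using half_pos hγ
  filter_upwards [hcont.eventually_lt_const hlt] with t ht
  have := norm_schrodinger_sub_le (lam • W) (t.1 • W)
  exact (h.perturb _ _).mono (by linarith)

theorem exists_gap_family (hK : IsCompact K) (hK0 : ∀ lam ∈ K, lam ≠ 0)
    (hGR : ∀ lam ∈ K, GapRich k ((fun w => lam • w) '' Y) S) (hC : IsCompact C)
    (hCS : Disjoint C S) (hX : X ∈ PerY k Y) (hε : 0 < ε) :
    ∃ (m : ℕ) (P : Fin m → ℤ →ᵇ (Fin k → ℝ)), 0 < m ∧ (∀ j, P j ∈ PerY k Y ∧ dist (P j) X ≤ ε) ∧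
      ∃ γ > 0, ∀ lam ∈ K, ∀ E ∈ C, ∃ j, HasGap (schrodinger (lam • aggregate k (P j))) E γ := by
  obtain ⟨F, hFA, hF, γ, hγ, hgap⟩ := exists_finite_uniform_of_isCompact (hK.prod hC)
    (A := {P | P ∈ PerY k Y ∧ dist P X ≤ ε})
    (p := fun P γ t => HasGap (schrodinger (t.1 • aggregate k P)) t.2 γ) HasGap.mono
    fun ⟨lam, E⟩ ⟨hlam, hE⟩ => by
      obtain ⟨P, hP, hPX, γ, hγ, hgap⟩ :=
        exists_mem_perY_hasGap (hK0 lam hlam) (hGR lam hlam) hX (disjoint_left.1 hCS hE) hε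
      exact ⟨P, ⟨hP, hPX⟩, γ / 2, half_pos hγ, hgap.eventually_hasGap_smul hγ⟩
  obtain ⟨m, P, -, hPF⟩ := (hF.insert X).fin_param
  obtain ⟨j, -⟩ : X ∈ range P := hPF ▸ mem_insert X F
  have hPA : range P ⊆ {P | P ∈ PerY k Y ∧ dist P X ≤ ε} :=
    hPF ▸ insert_subset ⟨hX, (dist_self X).trans_le hε.le⟩ hFA
  refine ⟨m, P, j.pos, fun j => hPA (mem_range_self j), γ, hγ, fun lam hlam E hE => ?_⟩
  obtain ⟨P', hP', hgap⟩ := hgap (lam, E) ⟨hlam, hE⟩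
  obtain ⟨j, rfl⟩ : P' ∈ range P := hPF ▸ mem_insert_of_mem X hP'
  exact ⟨j, hgap⟩

theorem exists_common_period {ι α : Type*} [Finite ι] {P : ι → ℤ → α}
    (h : ∀ j, ∃ q : ℕ, 0 < q ∧ Function.Periodic (P j) q) :
    ∃ q : ℕ, 0 < q ∧ ∀ j, Function.Periodic (P j) q := by
  have := Fintype.ofFinite ι
  choose q hq hP using h
  refine ⟨∏ j, q j, Finset.prod_pos fun j _ => hq j, fun j => ?_⟩
  obtain ⟨c, hc⟩ := Finset.dvd_prod_of_mem q (Finset.mem_univ j)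
  rw [hc, mul_comm, Nat.cast_mul]
  exact (hP j).nat_mul c

theorem exists_mem_perY_aggregate_eq (hk : 0 < k) {m M : ℕ} {P : Fin m → ℤ →ᵇ (Fin k → ℝ)}
    (hm : 0 < m) (hM : 0 < M) (hP : ∀ j, P j ∈ PerY k Y ∧ dist (P j) X ≤ ε)
    (hper : ∀ j, Function.Periodic (P j) (2 * M : ℕ)) :
    ∃ y ∈ PerY k Y, dist y X ≤ ε ∧
      Function.Periodic (aggregate k y) (m * (2 * (k * M)) : ℕ) ∧
      ∀ (j : Fin m) n, cutDist (m * (2 * (k * M))) n < (k * M : ℕ) →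
        aggregate k (P j) (n + (2 * j + 1) * (k * M : ℕ)) =
          aggregate k y (n + (2 * j + 1) * (k * M : ℕ)) := by
  have happly := exists_concat_apply_eq hm (fun j => ⇑(P j)) (2 * M)
  have hε : 0 ≤ ε := dist_nonneg.trans (hP ⟨0, hm⟩).2
  obtain ⟨y, hy, hyX⟩ := exists_coe_eq_of_dist_le X (f := concat (fun j => ⇑(P j)) (2 * M)) hε
    fun n => by
      obtain ⟨j, hj⟩ := happly n
      rw [hj]
      exact (dist_coe_le_dist n).trans (hP j).2
  have hyper : Function.Periodic y (m * (2 * M) : ℕ) := hy ▸ concat_periodic (by positivity) hper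
  have hlen : k * (2 * M) = 2 * (k * M) := by ring
  have hagg : ⇑(aggregate k y) = concat (fun j => ⇑(aggregate k (P j))) (2 * (k * M)) := by
    rw [coe_aggregate, hy, agg_concat, hlen]
    rfl
  refine ⟨y, ⟨⟨_, by positivity, hyper⟩, fun n => ?_⟩, hyX, ?_, fun j n hn => ?_⟩
  · obtain ⟨j, hj⟩ := happly n
    rw [hy, hj]
    exact (hP j).1.2 n
  · rw [← hlen, mul_left_comm, mul_comm]
    exact agg_periodic hyper
  · rw [hagg, concat_eq_of_cutDist_lt _ (by positivity) j hn]

theorem exists_thin_family (hk : 0 < k) (hK : IsCompact K) (hK0 : ∀ lam ∈ K, lam ≠ 0)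
    (hGR : ∀ lam ∈ K, GapRich k ((fun w => lam • w) '' Y) S) (hC : IsCompact C)
    (hCS : Disjoint C S) (hX : X ∈ PerY k Y) (hε : 0 < ε) :
    ∃ (A : ℕ) (x : ℝ), 0 < x ∧ x < 1 ∧ ∀ N > 0, ∃ y ∈ PerY k Y, dist y X ≤ ε ∧
      ∃ g > 0, ∀ lam ∈ K, ∃ t : Finset ℝ, t.card ≤ A * N ∧ ∀ E ∈ C,
        Disjoint (Metric.ball E (4 * x ^ N)) t →
          HasGap (schrodinger (lam • aggregate k y)) E g := by
  obtain ⟨m, P, hm, hP, γ, hγ, hgap⟩ := exists_gap_family hK hK0 hGR hC hCS hX hε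
  obtain ⟨p, hp, hper⟩ := exists_common_period fun j => (hP j).1.1
  have hx := decayRate_pos γ
  refine ⟨m * (m * (2 * (k * (4 * p)))), decayRate γ, hx, decayRate_lt_one hγ, fun N hN => ?_⟩
  obtain ⟨y, hy, hyX, hyper, hUV⟩ := exists_mem_perY_aggregate_eq (M := 4 * N * p) hk hm
    (by positivity) hP fun j => by
      rw [← mul_assoc, Nat.cast_mul]
      exact (hper j).nat_mul _
  refine ⟨y, hy, hyX, 2 * decayRate γ ^ N / (1 + 4 / γ), by positivity, fun lam hlam => ?_⟩
  have hbarrier : 4 * N ≤ k * (4 * N * p) :=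
    (Nat.le_mul_of_pos_right _ hp).trans (Nat.le_mul_of_pos_left _ hk)
  obtain ⟨t, ht, hgap'⟩ := exists_card_le_forall_hasGap_of_barriers (N := N)
    (U := fun j => lam • aggregate k (P j)) (V := lam • aggregate k y) (by positivity)
    (hyper.smul lam) hγ fun j n hn =>
      congrArg (lam • ·) (hUV j n (hn.trans_le (by exact_mod_cast hbarrier)))
  refine ⟨t, ht.trans_eq ?_, fun E hE => hgap' E (hgap lam hlam E hE)⟩
  rw [Fintype.card_fin]
  ring

theorem spectrum_schrodinger_inter_subset_of_hasGap {W W' : ℤ →ᵇ ℝ} {t : Finset ℝ} {r g : ℝ}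
    (hgap : ∀ E ∈ C, Disjoint (Metric.ball E r) t → HasGap (schrodinger W) E g)
    (hW : ‖W - W'‖ < g) :
    spectrum ℝ (schrodinger W') ∩ C ⊆ ⋃ e ∈ t, Metric.closedBall e r := by
  rintro E ⟨hE, hEC⟩
  contrapose! hE
  refine ((hgap E hEC ?_).schrodinger_congr le_rfl).notMem_spectrum (isSelfAdjoint_schrodinger W')
    (sub_pos.2 hW)
  refine disjoint_left.2 fun e he het => hE (mem_biUnion het ?_)
  exact Metric.ball_subset_closedBall (Metric.mem_ball_comm.1 he)

end GapFamilies

section ThinCovers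

/-- `s` is covered by finitely many sets `U i` with `∑ diam (U i) ^ α < η`, so that its
`α`-dimensional Hausdorff content is less than `η`. -/
def HasThinCover {X : Type*} [PseudoEMetricSpace X] (s : Set X) (α : ℝ) (η : ℝ≥0∞) : Prop :=
  ∃ (ι : Type) (_ : Fintype ι) (U : ι → Set X), s ⊆ ⋃ i, U i ∧ ∑ i, Metric.ediam (U i) ^ α < η

theorem HasThinCover.mono {X : Type*} [PseudoEMetricSpace X] {s t : Set X} {α : ℝ} {η : ℝ≥0∞}
    (ht : HasThinCover t α η) (hst : s ⊆ t) : HasThinCover s α η := by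
  obtain ⟨ι, _, U, hU, hsum⟩ := ht
  exact ⟨ι, _, U, hst.trans hU, hsum⟩

theorem HasThinCover.union {X : Type*} [PseudoEMetricSpace X] {s t : Set X} {α : ℝ} {η θ : ℝ≥0∞}
    (hs : HasThinCover s α η) (ht : HasThinCover t α θ) : HasThinCover (s ∪ t) α (η + θ) := by
  obtain ⟨ι, _, U, hU, hsumU⟩ := hs
  obtain ⟨κ, _, V, hV, hsumV⟩ := ht
  refine ⟨ι ⊕ κ, inferInstance, Sum.elim U V, ?_, ?_⟩
  · rw [iUnion_sum]
    exact union_subset_union hU hV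
  · rw [Fintype.sum_sum_type]
    exact ENNReal.add_lt_add hsumU hsumV

theorem hasThinCover_biUnion_closedBall {t : Finset ℝ} {r α : ℝ} {η : ℝ≥0∞} (hr : 0 ≤ r)
    (hα : 0 ≤ α) (h : ENNReal.ofReal (t.card * (2 * r) ^ α) < η) :
    HasThinCover (⋃ e ∈ t, Metric.closedBall e r) α η := by
  refine ⟨t, inferInstance, fun e => Metric.closedBall e r, ?_, ?_⟩
  · exact iUnion₂_subset fun e he => subset_iUnion_of_subset ⟨e, he⟩ subset_rfl
  · have hdiam (e : ℝ) : Metric.ediam (Metric.closedBall e r) = ENNReal.ofReal (2 * r) := by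
      rw [Real.closedBall_eq_Icc, Real.ediam_Icc]
      ring_nf
    have hr : 0 ≤ 2 * r := by positivity
    simp only [hdiam, ENNReal.ofReal_rpow_of_nonneg hr hα, Finset.sum_const, Finset.card_univ,
      Fintype.card_coe]
    rwa [← ENNReal.ofReal_nsmul, nsmul_eq_mul]

theorem dimH_le_of_forall_hasThinCover {X : Type*} [EMetricSpace X] {s : Set X} {α : ℝ≥0}
    (hα : 0 < α) (h : ∀ n : ℕ, HasThinCover s α (n : ℝ≥0∞)⁻¹) : dimH s ≤ α := by
  borelize X
  choose ι _ U hU hsum using h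
  have hdiam (n : ℕ) (i : ι n) : Metric.ediam (U n i) ≤ ((n : ℝ≥0∞)⁻¹) ^ (α : ℝ)⁻¹ :=
    (ENNReal.le_rpow_inv_iff hα).2
      ((Finset.single_le_sum (fun _ _ => zero_le) (Finset.mem_univ i)).trans (hsum n).le)
  have hdiam_lim : Tendsto (fun n : ℕ => ((n : ℝ≥0∞)⁻¹) ^ (α : ℝ)⁻¹) atTop (𝓝 0) := by
    have := (ENNReal.continuous_rpow_const (y := (α : ℝ)⁻¹)).tendsto 0
    rw [ENNReal.zero_rpow_of_pos (by positivity)] at this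
    exact this.comp ENNReal.tendsto_inv_nat_nhds_zero
  refine dimH_le_of_hausdorffMeasure_ne_top (ne_top_of_le_ne_top ENNReal.zero_ne_top ?_)
  calc Measure.hausdorffMeasure α s
      ≤ liminf (fun n => ∑ i, Metric.ediam (U n i) ^ (α : ℝ)) atTop :=
        Measure.hausdorffMeasure_le_liminf_sum _ _ _ hdiam_lim _ (.of_forall hdiam)
          (.of_forall hU)
    _ ≤ liminf (fun n : ℕ => (n : ℝ≥0∞)⁻¹) atTop :=
        liminf_le_liminf (.of_forall fun n => (hsum n).le)
    _ = 0 := ENNReal.tendsto_inv_nat_nhds_zero.liminf_eq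

theorem dimH_eq_zero_of_forall_hasThinCover {X : Type*} [EMetricSpace X] {s : Set X}
    (h : ∀ m n : ℕ, HasThinCover s (1 / ((m : ℝ) + 1)) (n : ℝ≥0∞)⁻¹) : dimH s = 0 := by
  have hle (m : ℕ) : dimH s ≤ ((1 / ((m : ℝ≥0) + 1) : ℝ≥0) : ℝ≥0∞) :=
    dimH_le_of_forall_hasThinCover (by positivity) fun n => by exact_mod_cast h m n
  have hlim : Tendsto (fun m : ℕ => ((1 / ((m : ℝ≥0) + 1) : ℝ≥0) : ℝ≥0∞)) atTop (𝓝 0) :=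
    ENNReal.tendsto_coe.2 tendsto_one_div_add_atTop_nhds_zero_nat
  exact nonpos_iff_eq_zero.1 (ge_of_tendsto' hlim hle)

theorem exists_pos_ofReal_mul_rpow_lt (c : ℝ) {α : ℝ} (hα : 0 < α) {η : ℝ≥0∞} (hη : 0 < η) :
    ∃ ρ > 0, ENNReal.ofReal (c * (2 * ρ) ^ α) < η := by
  have hcont : ContinuousAt (fun ρ : ℝ => ENNReal.ofReal (c * (2 * ρ) ^ α)) 0 := by
    have := (Real.continuous_rpow_const hα.le).comp (continuous_const_mul (2 : ℝ))
    exact (ENNReal.continuous_ofReal.comp (continuous_const.mul this)).continuousAt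
  have hlt := hcont.eventually_lt_const (u := η) (by simpa [Real.zero_rpow hα.ne'] using hη)
  obtain ⟨ρ, hρ, hρ0⟩ :=
    ((hlt.filter_mono nhdsWithin_le_nhds).and (self_mem_nhdsWithin (s := Ioi 0))).exists
  exact ⟨ρ, hρ0, hρ⟩

theorem exists_pos_ofReal_mul_pow_rpow_lt (A c : ℝ) {x α : ℝ} (hc : 0 ≤ c) (hx0 : 0 ≤ x)
    (hx1 : x < 1) (hα : 0 < α) {η : ℝ≥0∞} (hη : 0 < η) :
    ∃ N : ℕ, 0 < N ∧ ENNReal.ofReal (A * N * (c * x ^ N) ^ α) < η := by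
  have hlim : Tendsto (fun N : ℕ => ENNReal.ofReal (A * N * (c * x ^ N) ^ α)) atTop (𝓝 0) := by
    have := (tendsto_self_mul_const_pow_of_lt_one (Real.rpow_nonneg hx0 α)
      (Real.rpow_lt_one hx0 hx1 hα)).const_mul (A * c ^ α)
    rw [mul_zero] at this
    refine ENNReal.ofReal_zero ▸ ENNReal.tendsto_ofReal (this.congr fun N => ?_)
    rw [Real.mul_rpow hc (pow_nonneg hx0 N), ← Real.rpow_natCast_mul hx0, mul_comm (N : ℝ) α,
      Real.rpow_mul_natCast hx0]
    ring
  exact ((eventually_gt_atTop 0).and (hlim.eventually_lt_const hη)).exists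

theorem finite_inter_Icc_of_isDiscreteSet {S : Set ℝ} (hS : IsDiscreteSet S) (a b : ℝ) :
    (S ∩ Icc a b).Finite := by
  by_contra h
  obtain ⟨x, -, hx⟩ := Set.Infinite.exists_accPt_of_subset_isCompact h isCompact_Icc
    inter_subset_right
  exact hS x (hx.mono (principal_mono.2 inter_subset_left))

theorem exists_isCompact_disjoint_hasThinCover_diff {S : Set ℝ} (hS : IsDiscreteSet S) (a b : ℝ)
    {α : ℝ} (hα : 0 < α) {η : ℝ≥0∞} (hη : 0 < η) :
    ∃ C, IsCompact C ∧ Disjoint C S ∧ HasThinCover (Icc a b \ C) α η := by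
  obtain ⟨F, hF⟩ := (finite_inter_Icc_of_isDiscreteSet hS a b).exists_finset_coe
  obtain ⟨ρ, hρ, hFρ⟩ := exists_pos_ofReal_mul_rpow_lt F.card hα hη
  refine ⟨Icc a b \ ⋃ e ∈ F, Metric.ball e ρ, isCompact_Icc.diff ?_, ?_, ?_⟩
  · exact isOpen_biUnion fun _ _ => Metric.isOpen_ball
  · refine disjoint_left.2 fun E hE hES => hE.2 (mem_biUnion ?_ (Metric.mem_ball_self hρ))
    rw [hF]
    exact ⟨hES, hE.1⟩
  · refine (hasThinCover_biUnion_closedBall hρ.le hα.le hFρ).mono ?_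
    rw [sdiff_sdiff_right_self]
    exact inter_subset_right.trans
      (iUnion₂_mono fun _ _ => Metric.ball_subset_closedBall)

end ThinCovers

section ThinSpectra

variable {k : ℕ} {Y : Set (Fin k → ℝ)} {S K : Set ℝ}

theorem norm_smul_aggregate_le {lam Λ : ℝ} (hlam : |lam| ≤ Λ) (y : ℤ →ᵇ (Fin k → ℝ)) :
    ‖lam • aggregate k y‖ ≤ Λ * ‖y‖ := by
  rw [norm_smul, Real.norm_eq_abs]
  exact mul_le_mul hlam (norm_aggregate_le y) (norm_nonneg _) ((abs_nonneg _).trans hlam)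

theorem dist_smul_aggregate_le {lam Λ : ℝ} (hlam : |lam| ≤ Λ) (y z : ℤ →ᵇ (Fin k → ℝ)) :
    dist (lam • aggregate k y) (lam • aggregate k z) ≤ Λ * dist y z := by
  have hsub : lam • aggregate k y - lam • aggregate k z = lam • aggregate k (y - z) :=
    ((lam • aggregate k).map_sub y z).symm
  rw [dist_eq_norm, dist_eq_norm, hsub]
  exact norm_smul_aggregate_le hlam _

theorem spectrum_schrodinger_smul_aggregate_subset_Icc {lam Λ R : ℝ} {z : ℤ →ᵇ (Fin k → ℝ)}
    (hlam : |lam| ≤ Λ) (hz : ‖z‖ ≤ R) :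
    spectrum ℝ (schrodinger (lam • aggregate k z)) ⊆ Icc (-(2 + Λ * R)) (2 + Λ * R) := by
  have hΛ : 0 ≤ Λ := (abs_nonneg _).trans hlam
  have hnorm : ‖lam • aggregate k z‖ ≤ Λ * R :=
    (norm_smul_aggregate_le hlam z).trans (mul_le_mul_of_nonneg_left hz hΛ)
  exact (spectrum_schrodinger_subset_Icc _).trans (Icc_subset_Icc (by gcongr) (by gcongr))

theorem exists_mem_perY_forall_hasThinCover_spectrum (hk : 0 < k) (hS : IsDiscreteSet S)
    (hK : IsCompact K) (hK0 : ∀ lam ∈ K, lam ≠ 0)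
    (hGR : ∀ lam ∈ K, GapRich k ((fun w => lam • w) '' Y) S) {α : ℝ} (hα : 0 < α) {η : ℝ≥0∞}
    (hη : 0 < η) {X : ℤ →ᵇ (Fin k → ℝ)} (hX : X ∈ PerY k Y) {ε : ℝ} (hε : 0 < ε) :
    ∃ y ∈ PerY k Y, dist y X ≤ ε ∧ ∃ δ > 0, ∀ z, dist z y < δ → ∀ lam ∈ K,
      HasThinCover (spectrum ℝ (schrodinger (lam • aggregate k z))) α η := by
  obtain ⟨Λ, hΛ, hKΛ⟩ := hK.isBounded.exists_pos_norm_le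
  set M := 2 + Λ * (‖X‖ + ε + 1)
  have hη2 : 0 < η / 2 := ENNReal.half_pos hη.ne'
  obtain ⟨C, hC, hCS, hcov⟩ := exists_isCompact_disjoint_hasThinCover_diff hS (-M) M hα hη2
  obtain ⟨A, x, hx0, hx1, hthin⟩ := exists_thin_family hk hK hK0 hGR hC hCS hX hε
  obtain ⟨N, hN, hNη⟩ := exists_pos_ofReal_mul_pow_rpow_lt A 8 (by norm_num) hx0.le hx1 hα hη2
  obtain ⟨y, hyY, hyX, g, hg, hgap⟩ := hthin N hN
  refine ⟨y, hyY, hyX, min 1 (g / Λ), by positivity, fun z hz lam hlam => ?_⟩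
  obtain ⟨hz1, hz2⟩ := lt_min_iff.1 hz
  obtain ⟨t, ht, hgap⟩ := hgap lam hlam
  have hzX : ‖z‖ ≤ ‖X‖ + ε + 1 := by
    have h1 := norm_le_norm_add_norm_sub' z X
    have h2 := dist_triangle z y X
    rw [dist_eq_norm z X] at h2
    linarith
  have hsub := spectrum_schrodinger_smul_aggregate_subset_Icc (hKΛ lam hlam) hzX
  have hclose : ‖lam • aggregate k y - lam • aggregate k z‖ < g := by
    rw [← dist_eq_norm]
    refine (dist_smul_aggregate_le (hKΛ lam hlam) y z).trans_lt ?_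
    rwa [dist_comm, ← lt_div_iff₀' hΛ]
  have hC_cov : HasThinCover (spectrum ℝ (schrodinger (lam • aggregate k z)) ∩ C) α (η / 2) := by
    refine (hasThinCover_biUnion_closedBall (by positivity) hα.le ?_).mono
      (spectrum_schrodinger_inter_subset_of_hasGap hgap hclose)
    refine (ENNReal.ofReal_le_ofReal ?_).trans_lt hNη
    rw [← mul_assoc, show (2 : ℝ) * 4 = 8 by norm_num]
    gcongr
    exact_mod_cast ht
  rw [← ENNReal.add_halves η]
  refine (hC_cov.union hcov).mono fun E hE => ?_
  by_cases hEC : E ∈ C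
  exacts [.inl ⟨hE, hEC⟩, .inr ⟨hsub hE, hEC⟩]

end ThinSpectra

section Genericity

theorem eventually_residual_closure {X : Type*} [PseudoMetricSpace X] {A : Set X} {p : X → Prop}
    (h : ∀ x ∈ A, ∀ ε > 0, ∃ y ∈ A, dist y x ≤ ε ∧ ∃ δ > 0, ∀ z, dist z y < δ → p z) :
    ∀ᶠ y : closure A in residual (closure A), p y := by
  refine mem_of_superset (residual_of_dense_open isOpen_interior ?_) interior_subset
  refine Metric.dense_iff.2 fun y₀ ε hε => ?_
  obtain ⟨x, hx, hyx⟩ := Metric.mem_closure_iff.1 y₀.2 (ε / 2) (half_pos hε)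
  obtain ⟨y, hy, hyx', δ, hδ, hball⟩ := h x hx (ε / 4) (by positivity)
  refine ⟨⟨y, subset_closure hy⟩, ?_, mem_interior.2 ⟨Metric.ball ⟨y, subset_closure hy⟩ δ,
    fun z hz => hball z hz, Metric.isOpen_ball, Metric.mem_ball_self hδ⟩⟩
  calc dist y y₀ ≤ dist y x + dist x y₀ := dist_triangle _ _ _
    _ ≤ ε / 4 + ε / 2 := add_le_add hyx' (by rw [dist_comm]; exact hyx.le)
    _ < ε := by linarith

variable {k : ℕ} {Y : Set (Fin k → ℝ)} {S K : Set ℝ}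

theorem eventually_residual_dimH_spectrum_eq_zero (hk : 0 < k) (hS : IsDiscreteSet S)
    (hK : IsCompact K) (hK0 : ∀ lam ∈ K, lam ≠ 0)
    (hGR : ∀ lam ∈ K, GapRich k ((fun w => lam • w) '' Y) S) :
    ∀ᶠ y : LPY k Y in residual (LPY k Y), ∀ lam ∈ K,
      dimH (spectrum ℝ (schrodinger (lam • aggregate k (y : ℤ →ᵇ (Fin k → ℝ))))) = 0 := by
  have hthin (m n : ℕ) : ∀ᶠ y : LPY k Y in residual (LPY k Y), ∀ lam ∈ K,
      HasThinCover (spectrum ℝ (schrodinger (lam • aggregate k (y : ℤ →ᵇ (Fin k → ℝ)))))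
        (1 / ((m : ℝ) + 1)) (n : ℝ≥0∞)⁻¹ :=
    eventually_residual_closure fun X hX ε hε =>
      exists_mem_perY_forall_hasThinCover_spectrum hk hS hK hK0 hGR (by positivity)
        (ENNReal.inv_pos.2 (ENNReal.natCast_ne_top n)) hX hε
  filter_upwards [eventually_countable_forall.2 fun m => eventually_countable_forall.2 (hthin m)]
    with y hy lam hlam
  exact dimH_eq_zero_of_forall_hasThinCover fun m n => hy m n lam hlam

theorem isZeroDimCantor_spectrum_schrodinger {W : ℤ →ᵇ ℝ} (hW : W ∈ LPZ)
    (hdim : dimH (spectrum ℝ (schrodinger W)) = 0) :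
    IsZeroDimCantor (spectrum ℝ (schrodinger W)) := by
  refine ⟨spectrum_nonempty_of_isSelfAdjoint (isSelfAdjoint_schrodinger W),
    isCompact_spectrum_schrodinger W, preperfect_spectrum_schrodinger hW,
    not_nonempty_iff_eq_empty.1 fun hint => ?_, hdim⟩
  rw [Real.dimH_of_nonempty_interior hint, Module.finrank_self, Nat.cast_one] at hdim
  exact one_ne_zero hdim

end Genericity

theorem gapRich_coupling_generic_zero_dim_cantor_general (k : ℕ) (hk : 0 < k)
    (S : Set ℝ) (hS : IsDiscreteSet S) (Y : Set (Fin k → ℝ))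
    (Z : Set ℝ) (hZ0 : ∀ lam ∈ Z, lam ≠ 0) (hZσ : IsSigmaCompact Z)
    (hGR : ∀ lam ∈ Z, GapRich k ((fun w => lam • w) '' Y) S) :
    ∃ R : Set (LPY k Y), IsGδ R ∧ Dense R ∧
      ∀ y ∈ R, ∀ lam ∈ Z,
        IsZeroDimCantor
          (SchrodingerSpectrum
            (fun n => lam * agg k (⇑(y : ℤ →ᵇ (Fin k → ℝ))) n)) := by
  obtain ⟨K, hK, rfl⟩ := hZσ
  have : CompleteSpace (LPY k Y) := isClosed_closure.completeSpace_coe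
  have hdim (i : ℕ) := eventually_residual_dimH_spectrum_eq_zero hk hS (hK i)
    (fun lam hlam => hZ0 lam (mem_iUnion_of_mem i hlam))
    fun lam hlam => hGR lam (mem_iUnion_of_mem i hlam)
  obtain ⟨R, hR, hRδ, hRd⟩ := mem_residual.1 (eventually_countable_forall.2 hdim)
  refine ⟨R, hRδ, hRd, fun y hy lam hlam => ?_⟩
  obtain ⟨i, hi⟩ := mem_iUnion.1 hlam
  have hcantor := isZeroDimCantor_spectrum_schrodinger (smul_aggregate_mem_LPZ hk lam y.2)
    (hR hy i lam hi)
  rwa [← schrodingerSpectrum_eq_spectrum] at hcantor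

/-- Coupling-constant version: if `S ⊆ ℝ` is discrete, `Y ⊆ ℝ^k` is a closed
perfect set, `Z ⊆ ℝ∖{0}` is σ-compact, and `λY` is gap-rich with exceptional set
`S` for every `λ ∈ Z`, then for generic `y ∈ LP(ℤ,Y)` the spectrum of `H_{λy}`
is a Cantor set of zero Hausdorff dimension for all `λ ∈ Z`. -/
theorem gapRich_coupling_generic_zero_dim_cantor (k : ℕ) (hk : 0 < k)
    (S : Set ℝ) (hS : IsDiscreteSet S)
    (Y : Set (Fin k → ℝ)) (hY : Perfect Y)
    (Z : Set ℝ) (hZ0 : ∀ lam ∈ Z, lam ≠ 0) (hZσ : IsSigmaCompact Z)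
    (hGR : ∀ lam ∈ Z, GapRich k ((fun w => lam • w) '' Y) S) :
    ∃ R : Set (LPY k Y), IsGδ R ∧ Dense R ∧
      ∀ y ∈ R, ∀ lam ∈ Z,
        IsZeroDimCantor
          (SchrodingerSpectrum
            (fun n => lam * agg k (⇑(y : ℤ →ᵇ (Fin k → ℝ))) n)) :=
  gapRich_coupling_generic_zero_dim_cantor_general k hk S hS Y Z hZ0 hZσ hGR
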